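/- arXiv:1710.10838 — 2 statements merged into one kernel-verified Lean document; each statement's English description precedes it below -/
import Mathlib

section
/- Let k ≡ 3 (mod 4), k ≥ 7, and let P₃ ≅ S^(k-2,2) mod 2 be the irreducible summand of the 𝔽₂ A_k permutation module on 2-subsets as above. Then dim H²(A_k, P₃) = 1 over 𝔽₂. -/
open Pointwise

/-- Permutation representation of `G` on `X → F` from an action of `G` on `X`. -/
def permRep (F G X : Type*) [CommRing F] [Group G] [MulAction G X] :
    Representation F G (X → F) where
  toFun g := LinearMap.funLeft F F (fun x => g⁻¹ • x)
  map_one' := by ext v x; simp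
  map_mul' g h := by ext v x; simp [LinearMap.funLeft, mul_smul]

variable {F G V : Type*} [CommRing F] [Group G] [AddCommGroup V] [Module F V]

/-- A submodule invariant under a representation. -/
def InvSub (ρ : Representation F G V) (U : Submodule F V) : Prop :=
  ∀ g, ∀ v ∈ U, ρ g v ∈ U

/-- The subrepresentation on an invariant submodule. -/
def subRep (ρ : Representation F G V) (U : Submodule F V)
    (hU : InvSub ρ U) : Representation F G U where
  toFun g := (ρ g).restrict (hU g)
  map_one' := by ext v; simp [LinearMap.restrict_apply]
  map_mul' g h := by ext v; simp [LinearMap.restrict_apply]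

/-- The set of 2-element subsets of `{1,…,k}`. -/
def Xk (k : ℕ) := {s : Finset (Fin k) // s.card = 2}

instance (k : ℕ) : Fintype (Xk k) := Subtype.fintype _
instance (k : ℕ) : DecidableEq (Xk k) := Subtype.instDecidableEq

instance (k : ℕ) : MulAction (Equiv.Perm (Fin k)) (Xk k) where
  smul g s := ⟨g • s.1, by rw [Finset.card_smul_finset]; exact s.2⟩
  one_smul s := Subtype.ext (one_smul _ s.1)
  mul_smul g h s := Subtype.ext (mul_smul g h s.1)

/-- The linear functional `v ↦ ∑_s w s * v s`. -/
noncomputable def formMap {X : Type*} [Fintype X] [DecidableEq X] (F : Type*) [CommRing F]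
    (w : X → F) : (X → F) →ₗ[F] F :=
  ∑ q : X, w q • (LinearMap.proj q : (X → F) →ₗ[F] F)

/-- Orthogonal complement of `U` with respect to the standard form. -/
noncomputable def perpSub {X : Type*} [Fintype X] [DecidableEq X] (F : Type*) [CommRing F]
    (U : Submodule F (X → F)) : Submodule F (X → F) :=
  ⨅ w : U, LinearMap.ker (formMap F (w : X → F))

/-- The orthogonal complement of an invariant submodule is invariant. -/
lemma perpSub_inv {X : Type*} [Fintype X] [DecidableEq X]
    (F G : Type*) [CommRing F] [Group G] [MulAction G X]
    (U : Submodule F (X → F)) (hU : InvSub (permRep F G X) U) :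
    InvSub (permRep F G X) (perpSub F U) := by
  intro g v hv
  have hv2 : ∀ w : U, ∑ q : X, (w : X → F) q * v q = 0 := by
    intro w
    have h2 := hv
    rw [perpSub] at h2
    have := (Submodule.mem_iInf _).mp h2 w
    simpa only [LinearMap.mem_ker, formMap, LinearMap.sum_apply,
      LinearMap.smul_apply, LinearMap.proj_apply, smul_eq_mul] using this
  rw [perpSub]
  refine (Submodule.mem_iInf _).mpr fun w => ?_
  simp only [LinearMap.mem_ker, formMap, LinearMap.sum_apply,
    LinearMap.smul_apply, LinearMap.proj_apply, smul_eq_mul]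
  calc ∑ q : X, (w : X → F) q * permRep F G X g v q
      = ∑ q : X, (w : X → F) (g • q) * v q := by
        exact Fintype.sum_equiv (MulAction.toPerm g).symm _ _ (fun q => by
          simp [MulAction.toPerm, permRep, LinearMap.funLeft])
    _ = 0 := by
        have hw : permRep F G X g⁻¹ (w : X → F) ∈ U := hU g⁻¹ w w.2
        have := hv2 ⟨_, hw⟩
        rw [← this]
        exact Finset.sum_congr rfl fun q _ => by
          simp [permRep, LinearMap.funLeft]

/-- `f = Σ_{i<j} e_{ij}`: the all-ones vector. -/
def allOnes (k : ℕ) : Xk k → ZMod 2 := fun _ => 1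

/-- `x_i = Σ_j e_{ij}`. -/
def xVec (k : ℕ) (i : Fin k) : Xk k → ZMod 2 := fun s => if i ∈ s.1 then 1 else 0

def P1 (k : ℕ) : Submodule (ZMod 2) (Xk k → ZMod 2) :=
  Submodule.span (ZMod 2) {allOnes k}

def P2 (k : ℕ) : Submodule (ZMod 2) (Xk k → ZMod 2) :=
  Submodule.span (ZMod 2) (Set.range (xVec k))

lemma P1_sup_P2_inv (k : ℕ) :
    InvSub (permRep (ZMod 2) (alternatingGroup (Fin k)) (Xk k)) (P1 k ⊔ P2 k) := by
  intro g v hv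
  have : (P1 k ⊔ P2 k).map (permRep (ZMod 2) (alternatingGroup (Fin k)) (Xk k) g)
      ≤ P1 k ⊔ P2 k := by
    rw [Submodule.map_sup, P1, P2, Submodule.map_span, Submodule.map_span]
    refine sup_le_sup (Submodule.span_le.mpr ?_) (Submodule.span_le.mpr ?_)
    · rintro - ⟨w, rfl, rfl⟩
      exact Submodule.subset_span rfl
    · rintro - ⟨-, ⟨i, rfl⟩, rfl⟩
      refine Submodule.subset_span ⟨(g : Equiv.Perm (Fin k)) i, ?_⟩
      funext s
      show xVec k ((g : Equiv.Perm (Fin k)) i) s = xVec k i (g⁻¹ • s)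
      have hmem : ((g : Equiv.Perm (Fin k)) i ∈ s.1) ↔ (i ∈ ((g⁻¹ • s : Xk k)).1) := by
        show _ ↔ i ∈ (g : Equiv.Perm (Fin k))⁻¹ • s.1
        rw [Finset.mem_inv_smul_finset_iff]
        exact Iff.rfl
      simp only [xVec, hmem]
  exact this ⟨v, hv, rfl⟩

/-- `P₃ = (P₁ + P₂)^⊥ ≅ S^(k-2,2)`, with its `A_k`-representation. -/
noncomputable def P3Rep (k : ℕ) :
    Representation (ZMod 2) (alternatingGroup (Fin k))
      (perpSub (ZMod 2) (P1 k ⊔ P2 k)) :=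
  subRep _ _ (perpSub_inv (ZMod 2) (alternatingGroup (Fin k)) _ (P1_sup_P2_inv k))


/-! ## Part A: 2-cocycles with values in `ZMod 2` and the twisted extension -/

/-- Two-cocycles with trivial coefficients `𝔽₂`. -/
def IsC {G : Type*} [Group G] (f : G → G → ZMod 2) : Prop :=
  ∀ a b c, f (a * b) c + f a b = f b c + f a (b * c)

/-- Two-coboundaries with trivial coefficients `𝔽₂`. -/
def IsB {G : Type*} [Group G] (f : G → G → ZMod 2) : Prop :=
  ∃ x : G → ZMod 2, ∀ a b, f a b = x a + x b + x (a * b)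

lemma zmod2_add_self (a : ZMod 2) : a + a = 0 := CharTwo.add_self_eq_zero a

lemma IsC.one_left {G : Type*} [Group G] {f : G → G → ZMod 2} (hf : IsC f) (a : G) :
    f 1 a = f 1 1 := by
  have := hf 1 1 a
  simp only [mul_one, one_mul] at this
  exact (add_left_cancel this).symm

lemma IsC.one_right {G : Type*} [Group G] {f : G → G → ZMod 2} (hf : IsC f) (a : G) :
    f a 1 = f 1 1 := by
  have := hf a 1 1
  simp only [mul_one] at this
  exact add_right_cancel this

/-- The central extension defined by a cocycle. -/
@[ext] structure TwExt {G : Type*} [Group G] (f : G → G → ZMod 2) (hf : IsC f) where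
  g : G
  a : ZMod 2

namespace TwExt

variable {H : Type*} [Group H] {f : H → H → ZMod 2} {hf : IsC f}

instance : Mul (TwExt f hf) := ⟨fun x y => ⟨x.g * y.g, x.a + y.a + f x.g y.g⟩⟩
instance : One (TwExt f hf) := ⟨⟨1, f 1 1⟩⟩
instance : Inv (TwExt f hf) := ⟨fun x => ⟨x.g⁻¹, x.a + f x.g⁻¹ x.g + f 1 1⟩⟩

@[simp] lemma mul_g (x y : TwExt f hf) : (x * y).g = x.g * y.g := rfl
@[simp] lemma mul_a (x y : TwExt f hf) : (x * y).a = x.a + y.a + f x.g y.g := rfl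
@[simp] lemma one_g : (1 : TwExt f hf).g = 1 := rfl
@[simp] lemma one_a : (1 : TwExt f hf).a = f 1 1 := rfl
@[simp] lemma inv_g (x : TwExt f hf) : (x⁻¹).g = x.g⁻¹ := rfl
@[simp] lemma inv_a (x : TwExt f hf) : (x⁻¹).a = x.a + f x.g⁻¹ x.g + f 1 1 := rfl

instance : Group (TwExt f hf) :=
  Group.ofLeftAxioms
    (fun x y z => by
      ext
      · simp [mul_assoc]
      · simp only [mul_a, mul_g]
        linear_combination hf x.g y.g z.g)
    (fun x => by
      ext
      · simp
      · simp only [mul_a, one_a, one_g, hf.one_left x.g]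
        linear_combination zmod2_add_self (f 1 1))
    (fun x => by
      ext
      · simp
      · simp only [mul_a, one_a, inv_a, inv_g]
        linear_combination zmod2_add_self x.a + zmod2_add_self (f x.g⁻¹ x.g))

/-- The projection. -/
def π : TwExt f hf →* H where
  toFun x := x.g
  map_one' := rfl
  map_mul' _ _ := rfl

@[simp] lemma π_apply (x : TwExt f hf) : π x = x.g := rfl

lemma π_surj : Function.Surjective (π : TwExt f hf →* H) := fun g => ⟨⟨g, 0⟩, rfl⟩

/-- The central involution. -/
def z : TwExt f hf := ⟨1, f 1 1 + 1⟩

@[simp] lemma z_g : (z : TwExt f hf).g = 1 := rfl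
@[simp] lemma z_a : (z : TwExt f hf).a = f 1 1 + 1 := rfl

lemma z_central (x : TwExt f hf) : z * x = x * z := by
  ext
  · simp
  · simp only [mul_a, z_a, z_g, hf.one_left, hf.one_right]
    ring

lemma z_ne : (z : TwExt f hf) ≠ 1 := by
  intro h
  have := congrArg TwExt.a h
  simp at this

lemma z_sq : (z : TwExt f hf) * z = 1 := by
  ext
  · simp
  · simp only [mul_a, z_a, z_g, one_a]
    linear_combination zmod2_add_self (f 1 1) + zmod2_add_self 1

lemma ker_π (x : TwExt f hf) (hx : π x = 1) : x = 1 ∨ x = z := by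
  have h2 : x.g = 1 := hx
  have key : ∀ a b : ZMod 2, a = b ∨ a = b + 1 := by decide
  rcases key x.a (f 1 1) with h | h
  · left; ext; exacts [h2, h]
  · right; ext; exacts [h2, h]

end TwExt

/-- Transfer: a class that is trivial on a subgroup of odd index is trivial. -/
lemma isB_of_odd_index {G : Type*} [Group G] {f : G → G → ZMod 2} (hf : IsC f)
    (D : Subgroup G) (hodd : Odd D.index) (x : G → ZMod 2)
    (hx : ∀ a ∈ D, ∀ b ∈ D, f a b = x a + x b + x (a * b)) : IsB f := by
  classical
  let D' : Subgroup (TwExt f hf) := D.comap TwExt.π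
  have hidx : D'.index = D.index := Subgroup.index_comap_of_surjective _ TwExt.π_surj
  have : D'.FiniteIndex := ⟨by rw [hidx]; exact hodd.pos.ne'⟩
  let ψ : D' →* Multiplicative (ZMod 2) := MonoidHom.mk'
    (fun e => Multiplicative.ofAdd (e.1.a + x e.1.g)) (by
      rintro ⟨e, he⟩ ⟨e', he'⟩
      have := hx e.g he e'.g he'
      rw [← ofAdd_add]
      congr 1
      simp only [MulMemClass.mk_mul_mk, TwExt.mul_a, TwExt.mul_g]
      linear_combination this + zmod2_add_self (x (e.g * e'.g)))
  have hzpow : ∀ n : ℕ, ∀ y : TwExt f hf, y⁻¹ * TwExt.z ^ n * y = TwExt.z ^ n := by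
    intro n y
    have : Commute (TwExt.z : TwExt f hf) y := TwExt.z_central y
    rw [mul_assoc, (this.pow_left n).eq, inv_mul_cancel_left]
  have hzodd : (TwExt.z : TwExt f hf) ^ D'.index = TwExt.z := by
    rw [hidx]
    obtain ⟨n, hn⟩ := hodd
    rw [hn, pow_succ, pow_mul, pow_two, TwExt.z_sq, one_pow, one_mul]
  let r : TwExt f hf →* Multiplicative (ZMod 2) := ψ.transfer
  have hrz : r TwExt.z = Multiplicative.ofAdd 1 := by
    have h1 : r TwExt.z = _ :=
      MonoidHom.transfer_eq_pow ψ (TwExt.z : TwExt f hf) (fun n y _ => hzpow n y)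
    rw [h1]
    simp only [hzodd]
    show Multiplicative.ofAdd _ = _
    congr 1
    have h11 := hx 1 D.one_mem 1 D.one_mem
    rw [mul_one] at h11
    simp only [TwExt.z_a, TwExt.z_g]
    linear_combination h11 + 2 * zmod2_add_self (x 1)
  refine ⟨fun g => (r ⟨g, 0⟩).toAdd, fun a b => ?_⟩
  have key : ∀ c : ZMod 2, c = 0 ∨ c = 1 := by decide
  have hm : r (⟨a, 0⟩ * ⟨b, 0⟩) = r ⟨a, 0⟩ * r ⟨b, 0⟩ := map_mul _ _ _
  rw [show (⟨a, 0⟩ * ⟨b, 0⟩ : TwExt f hf) = ⟨a * b, f a b⟩ by ext <;> simp] at hm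
  have hm' := congrArg Multiplicative.toAdd hm
  rw [toAdd_mul] at hm'
  rw [← hm']
  rcases key (f a b) with h | h
  · rw [h, zmod2_add_self]
  · rw [h, show (⟨a * b, 1⟩ : TwExt f hf) = TwExt.z * ⟨a * b, 0⟩ by
      ext
      · simp
      · simp only [TwExt.mul_a, TwExt.z_a, TwExt.z_g, hf.one_left]
        linear_combination -zmod2_add_self (f 1 1), map_mul, toAdd_mul, hrz, toAdd_ofAdd, add_assoc,
      zmod2_add_self, add_zero]
/-! ## Part B: splitting of central extensions of the symmetric group -/

open Equiv in
/-- Permutations fixing all points `≥ j` centralise what the swaps in them centralise. -/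
lemma mem_of_swaps {M : ℕ} (j : ℕ) (C : Subgroup (Perm (Fin M)))
    (hC : ∀ a b : Fin M, a.1 < j → b.1 < j → swap a b ∈ C) (g : Perm (Fin M))
    (hg : ∀ i : Fin M, j ≤ i.1 → g i = i) : g ∈ C := by
  induction j generalizing g with
  | zero =>
    have : g = 1 := by ext i; rw [hg i (Nat.zero_le _)]; rfl
    rw [this]; exact C.one_mem
  | succ j ih =>
    have ih' := ih (fun a b ha hb => hC a b (by omega) (by omega))
    by_cases hj : j < M
    · set p : Fin M := ⟨j, hj⟩ with hp
      have hlt : (g p).1 < j + 1 := by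
        by_contra h
        have h1 := hg (g p) (by omega)
        have h2 : g p = p := g.injective h1
        rw [h2] at h
        simp [hp] at h
      have h3 : swap (g p) p * g ∈ C := by
        apply ih'
        intro i hi
        rw [Perm.mul_apply]
        by_cases hip : i = p
        · rw [hip, swap_apply_left]
        · have hi' : j + 1 ≤ i.1 := by
            have : i.1 ≠ j := fun h => hip (Fin.ext h)
            omega
          rw [hg i hi', swap_apply_of_ne_of_ne _ hip]
          intro h
          rw [← h] at hlt
          omega
      have h4 : swap (g p) p ∈ C := hC _ _ hlt (by simp [hp])
      have := C.mul_mem h4 h3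
      rwa [← mul_assoc, swap_mul_self, one_mul] at this
    · exact ih' g (fun i hi => absurd i.2 (by omega))

open Equiv in
/-- One induction step: extend a section from `S_j` to `S_{j+1}`. -/
lemma section_step {M : ℕ} {E : Type*} [Group E] (π : E →* Perm (Fin M))
    (hsurj : Function.Surjective π) (z : E) (hz1 : π z = 1) (hzz : z * z = 1)
    (hzc : ∀ x, z * x = x * z) (hker : ∀ x, π x = 1 → x = 1 ∨ x = z)
    (hsq : ∀ x a b, a ≠ b → π x = swap a b → x * x = 1)
    (hcomm : ∀ x y a b c d, a ≠ b → a ≠ c → a ≠ d → b ≠ c → b ≠ d → c ≠ d →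
      π x = swap a b → π y = swap c d → x * y = y * x)
    (j : ℕ) (hj1 : 1 ≤ j) (hj : j < M) (T : Subgroup E) (hzT : z ∉ T)
    (hT : ∀ t ∈ T, ∀ i : Fin M, j ≤ i.1 → π t i = i)
    (hTs : ∀ g : Perm (Fin M), (∀ i : Fin M, j ≤ i.1 → g i = i) → ∃ t ∈ T, π t = g) :
    ∃ T' : Subgroup E, z ∉ T' ∧ (∀ t ∈ T', ∀ i : Fin M, j + 1 ≤ i.1 → π t i = i) ∧
      (∀ g : Perm (Fin M), (∀ i : Fin M, j + 1 ≤ i.1 → g i = i) → ∃ t ∈ T', π t = g) := by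
  -- elements of `T` are determined by their images
  have hTinj : ∀ s ∈ T, ∀ t ∈ T, π s = π t → s = t := by
    intro s hs t ht h
    rcases hker (s * t⁻¹) (by rw [map_mul, map_inv, h, mul_inv_cancel]) with h1 | h1
    · exact mul_inv_eq_one.mp h1
    · exact absurd (h1 ▸ T.mul_mem hs (T.inv_mem ht)) hzT
  set p : Fin M := ⟨j, hj⟩ with hp
  set q : Fin M := ⟨j - 1, by omega⟩ with hq
  have hqp : q ≠ p := by intro h; have := congrArg Fin.val h; simp [hp, hq] at this; omega
  -- any lift of `(q p)` commutes with lifts of perms of `{0..j-2}`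
  have hcent : ∀ t, π t = swap q p → ∀ x, (∀ i : Fin M, j - 1 ≤ i.1 → π x i = i) →
      x * t = t * x := by
    intro t ht x hx
    have hmem : π x ∈ (Subgroup.centralizer {t}).map π := by
      refine mem_of_swaps (j - 1) _ ?_ _ hx
      intro a b ha hb
      obtain ⟨y, hy⟩ := hsurj (swap a b)
      refine ⟨y, ?_, hy⟩
      by_cases hab : a = b
      · rw [hab, swap_self] at hy
        rcases hker y hy with rfl | rfl
        · exact Subgroup.one_mem _
        · exact Subgroup.mem_centralizer_singleton_iff.mpr (by simpa using hzc t)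
      · refine Subgroup.mem_centralizer_singleton_iff.mpr ?_
        have e1 : a ≠ q := fun h => by rw [h] at ha; simp [hq] at ha
        have e2 : a ≠ p := fun h => by rw [h] at ha; simp [hp] at ha; omega
        have e3 : b ≠ q := fun h => by rw [h] at hb; simp [hq] at hb
        have e4 : b ≠ p := fun h => by rw [h] at hb; simp [hp] at hb; omega
        exact hcomm y t a b q p hab e1 e2 e3 e4 hqp hy ht
    obtain ⟨y, hy, hyx⟩ := hmem
    have hy' := Subgroup.mem_centralizer_singleton_iff.mp hy
    rcases hker (x * y⁻¹) (by rw [map_mul, map_inv, hyx, mul_inv_cancel]) with h1 | h1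
    · rw [mul_inv_eq_one.mp h1]; exact hy'
    · have : x = z * y := by rw [← h1]; group
      rw [this, mul_assoc, hy', ← mul_assoc, hzc, mul_assoc]
  -- choose the lift with the braid relation
  have hbraid : ∃ t, π t = swap q p ∧ ∀ r : Fin M, r.1 + 1 = q.1 → ∀ s ∈ T, π s = swap r q →
      t * s * t = s * t * s := by
    obtain ⟨t, ht⟩ := hsurj (swap q p)
    by_cases hj2 : 2 ≤ j
    · set r : Fin M := ⟨j - 2, by omega⟩ with hr
      have hrq : r ≠ q := by
        intro h; have := congrArg Fin.val h; simp [hr, hq] at this; omega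
      have hrp : r ≠ p := by
        intro h; have := congrArg Fin.val h; simp [hr, hp] at this; omega
      obtain ⟨s, hs, hsr⟩ := hTs (swap r q) (by
        intro i hi
        apply swap_apply_of_ne_of_ne
        · intro h; rw [h] at hi; simp [hr] at hi; omega
        · intro h; rw [h] at hi; simp [hq] at hi; omega)
      have huniq : ∀ r' : Fin M, r'.1 + 1 = q.1 → ∀ s' ∈ T, π s' = swap r' q → s' = s := by
        intro r' hr' s' hs' h
        have : r' = r := by apply Fin.ext; simp only [hq, hr] at hr' ⊢; omega
        rw [this] at h
        exact hTinj _ hs' _ hs (h.trans hsr.symm)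
      have hpi : π (t * s * t) = π (s * t * s) := by
        simp only [map_mul, ht, hsr]
        have e1 : swap q p * swap r q * swap q p = swap r p := by
          have := swap_mul_swap_mul_swap (x := r) (y := q) (z := p) hrq hrp
          simpa [swap_comm] using this
        have e2 : swap r q * swap q p * swap r q = swap r p := by
          have := swap_mul_swap_mul_swap (x := p) (y := q) (z := r) hqp.symm hrp.symm
          simpa [swap_comm] using this
        rw [e1, e2]
      rcases hker ((t * s * t) * (s * t * s)⁻¹) (by rw [map_mul, map_inv, hpi, mul_inv_cancel])
        with h1 | h1
      · refine ⟨t, ht, fun r' hr' s' hs' h => ?_⟩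
        rw [huniq r' hr' s' hs' h]
        exact mul_inv_eq_one.mp h1
      · refine ⟨z * t, by rw [map_mul, hz1, one_mul, ht], fun r' hr' s' hs' h => ?_⟩
        rw [huniq r' hr' s' hs' h]
        have h2 : t * s * t = z * (s * t * s) := by rw [← h1]; group
        calc z * t * s * (z * t) = z * (t * s * z) * t := by group
          _ = z * (z * (t * s)) * t := by rw [← hzc]
          _ = (z * z) * (t * s * t) := by group
          _ = z * (s * t * s) := by rw [hzz, one_mul, h2]
          _ = (z * s) * (t * s) := by group
          _ = s * (z * t) * s := by rw [hzc]; group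
    · exact ⟨t, ht, fun r hr => by simp only [hq] at hr; omega⟩
  obtain ⟨t, ht, htb⟩ := hbraid
  have htt : t * t = 1 := hsq t q p hqp ht
  -- key: `t T t ⊆ T ∪ T t T`
  have key : ∀ x ∈ T, (t * x * t ∈ T) ∨ ∃ u ∈ T, ∃ v ∈ T, t * x * t = u * t * v := by
    intro x hx
    by_cases hxq : π x q = q
    · left
      have := hcent t ht x (by
        intro i hi
        by_cases hiq : i = q
        · rw [hiq, hxq]
        · have : i.1 ≠ j - 1 := fun h => hiq (Fin.ext h)
          exact hT x hx i (by omega))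
      rw [mul_assoc, this, ← mul_assoc, htt, one_mul]
      exact hx
    · right
      set a := π x q with ha
      have hlt : a.1 < j := by
        by_contra h
        have h1 := hT x hx a (by omega)
        exact hxq ((π x).injective h1)
      have hltq : a.1 < j - 1 := by
        have : a.1 ≠ j - 1 := fun h => hxq (Fin.ext h)
        omega
      set r : Fin M := ⟨j - 2, by omega⟩ with hr
      have hrq : r ≠ q := by
        intro h; have := congrArg Fin.val h; simp [hr, hq] at this; omega
      obtain ⟨s, hs, hsr⟩ := hTs (swap r q) (by
        intro i hi
        apply swap_apply_of_ne_of_ne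
        · intro h; rw [h] at hi; simp [hr] at hi; omega
        · intro h; rw [h] at hi; simp [hq] at hi; omega)
      obtain ⟨h, hh, hhr⟩ := hTs (swap a r) (by
        intro i hi
        apply swap_apply_of_ne_of_ne
        · intro h; rw [h] at hi; omega
        · intro h; rw [h] at hi; simp [hr] at hi; omega)
      have hss : s * s = 1 := hsq s r q hrq hsr
      have hbr : t * s * t = s * t * s := htb r (by simp only [hr, hq]; omega) s hs hsr
      -- `y = s h x` fixes `q`
      have hy : (s * h * x) * t = t * (s * h * x) := by
        refine hcent t ht _ ?_
        intro i hi
        by_cases hiq : i = q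
        · rw [hiq, map_mul, map_mul, Perm.mul_apply, Perm.mul_apply, ← ha, hhr, hsr,
            swap_apply_left, swap_apply_left]
        · have : i.1 ≠ j - 1 := fun h => hiq (Fin.ext h)
          exact hT _ (T.mul_mem (T.mul_mem hs hh) hx) i (by omega)
      have hhc : h⁻¹ * t = t * h⁻¹ := by
        refine hcent t ht _ ?_
        intro i hi
        rw [map_inv, hhr, swap_inv]
        apply swap_apply_of_ne_of_ne
        · intro h; rw [h] at hi; omega
        · intro h; rw [h] at hi; simp [hr] at hi; omega
      have hs' : s⁻¹ = s := inv_eq_of_mul_eq_one_left hss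
      have hx' : x = h⁻¹ * s * (s * h * x) := by
        have : h⁻¹ * s * (s * h * x) = h⁻¹ * (s * s) * h * x := by group
        rw [this, hss]; group
      refine ⟨h⁻¹ * s, T.mul_mem (T.inv_mem hh) hs, s * (s * h * x),
        T.mul_mem hs (T.mul_mem (T.mul_mem hs hh) hx), ?_⟩
      calc t * x * t = t * (h⁻¹ * s * (s * h * x)) * t := by rw [← hx']
        _ = (t * h⁻¹) * s * ((s * h * x) * t) := by group
        _ = (h⁻¹ * t) * s * (t * (s * h * x)) := by rw [hhc, hy]
        _ = h⁻¹ * (t * s * t) * (s * h * x) := by group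
        _ = h⁻¹ * (s * t * s) * (s * h * x) := by rw [hbr]
        _ = h⁻¹ * s * t * (s * (s * h * x)) := by group
  have ht' : t⁻¹ = t := inv_eq_of_mul_eq_one_left htt
  let T' : Subgroup E :=
    { carrier := {e | e ∈ T ∨ ∃ u ∈ T, ∃ v ∈ T, e = u * t * v}
      one_mem' := Or.inl T.one_mem
      inv_mem' := by
        rintro e (he | ⟨u, hu, v, hv, rfl⟩)
        · exact Or.inl (T.inv_mem he)
        · refine Or.inr ⟨v⁻¹, T.inv_mem hv, u⁻¹, T.inv_mem hu, ?_⟩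
          rw [mul_inv_rev, mul_inv_rev, ht', mul_assoc]
      mul_mem' := by
        rintro e e' (he | ⟨u, hu, v, hv, rfl⟩) (he' | ⟨u', hu', v', hv', rfl⟩)
        · exact Or.inl (T.mul_mem he he')
        · exact Or.inr ⟨e * u', T.mul_mem he hu', v', hv', by group⟩
        · exact Or.inr ⟨u, hu, v * e', T.mul_mem hv he', by group⟩
        · rcases key (v * u') (T.mul_mem hv hu') with h | ⟨a, ha, b, hb, h⟩
          · left
            have : u * t * v * (u' * t * v') = u * (t * (v * u') * t) * v' := by group
            rw [this]
            exact T.mul_mem (T.mul_mem hu h) hv'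
          · right
            refine ⟨u * a, T.mul_mem hu ha, b * v', T.mul_mem hb hv', ?_⟩
            have : u * t * v * (u' * t * v') = u * (t * (v * u') * t) * v' := by group
            rw [this, h]
            group }
  refine ⟨T', ?_, ?_, ?_⟩
  · rintro (h | ⟨u, hu, v, hv, h⟩)
    · exact hzT h
    · have h1 : π (u * t * v) p = p := by rw [← h, hz1]; rfl
      rw [map_mul, map_mul, Perm.mul_apply, Perm.mul_apply, hT v hv p le_rfl, ht,
        swap_apply_right] at h1
      have h2 := hT u hu p le_rfl
      exact hqp ((π u).injective (h1.trans h2.symm))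
  · rintro e (he | ⟨u, hu, v, hv, rfl⟩) i hi
    · exact hT e he i (by omega)
    · rw [map_mul, map_mul, Perm.mul_apply, Perm.mul_apply, hT v hv i (by omega), ht,
        swap_apply_of_ne_of_ne, hT u hu i (by omega)]
      · intro h; rw [h] at hi; simp [hq] at hi; omega
      · intro h; rw [h] at hi; simp [hp] at hi
  · intro g hg
    by_cases hgp : g p = p
    · obtain ⟨t', h1, h2⟩ := hTs g (by
        intro i hi
        by_cases hip : i = p
        · rw [hip, hgp]
        · have : i.1 ≠ j := fun h => hip (Fin.ext h)
          exact hg i (by omega))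
      exact ⟨t', Or.inl h1, h2⟩
    · set a := g p with ha
      have hlt : a.1 < j := by
        have h0 : a.1 ≠ j := fun h => hgp (Fin.ext h)
        by_contra h
        have h1 := hg a (by omega)
        exact hgp (g.injective h1)
      obtain ⟨h, hh, hhr⟩ := hTs (swap a q) (by
        intro i hi
        apply swap_apply_of_ne_of_ne
        · intro h; rw [h] at hi; omega
        · intro h; rw [h] at hi; simp [hq] at hi; omega)
      obtain ⟨u, hu, hug⟩ := hTs (swap q p * swap a q * g) (by
        intro i hi
        by_cases hip : i = p
        · rw [hip, Perm.mul_apply, Perm.mul_apply, ← ha, swap_apply_left, swap_apply_left]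
        · have h1 : i.1 ≠ j := fun h => hip (Fin.ext h)
          have h2 : i ≠ a := by intro h; rw [h] at hi; omega
          have h3 : i ≠ q := by intro h; rw [h] at hi; simp [hq] at hi; omega
          rw [Perm.mul_apply, Perm.mul_apply, hg i (by omega), swap_apply_of_ne_of_ne h2 h3,
            swap_apply_of_ne_of_ne h3 hip])
      refine ⟨h * t * u, Or.inr ⟨h, hh, u, hu, rfl⟩, ?_⟩
      rw [map_mul, map_mul, hhr, ht, hug]
      simp [mul_assoc]

open Equiv in
/-- The extension splits. -/
lemma exists_section {M : ℕ} {E : Type*} [Group E] (π : E →* Perm (Fin M))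
    (hsurj : Function.Surjective π) (z : E) (hz1 : π z = 1) (hzz : z * z = 1) (hz : z ≠ 1)
    (hzc : ∀ x, z * x = x * z) (hker : ∀ x, π x = 1 → x = 1 ∨ x = z)
    (hsq : ∀ x a b, a ≠ b → π x = swap a b → x * x = 1)
    (hcomm : ∀ x y a b c d, a ≠ b → a ≠ c → a ≠ d → b ≠ c → b ≠ d → c ≠ d →
      π x = swap a b → π y = swap c d → x * y = y * x) :
    ∃ T : Subgroup E, z ∉ T ∧ ∀ g, ∃ t ∈ T, π t = g := by
  have main : ∀ j : ℕ, 1 ≤ j → j ≤ M → ∃ T : Subgroup E, z ∉ T ∧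
      (∀ t ∈ T, ∀ i : Fin M, j ≤ i.1 → π t i = i) ∧
      (∀ g : Perm (Fin M), (∀ i : Fin M, j ≤ i.1 → g i = i) → ∃ t ∈ T, π t = g) := by
    intro j hj
    induction j, hj using Nat.le_induction with
    | base =>
      intro h1
      refine ⟨⊥, by simpa using hz, ?_, ?_⟩
      · intro t ht i _
        rw [Subgroup.mem_bot.mp ht, map_one]; rfl
      · intro g hg
        refine ⟨1, Subgroup.one_mem _, ?_⟩
        rw [map_one]
        have h2 : ∀ i : Fin M, i ≠ ⟨0, by omega⟩ → g i = i := by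
          intro i hi
          apply hg
          have : i.1 ≠ 0 := fun h => hi (Fin.ext h)
          omega
        ext i
        by_cases hi : i = ⟨0, by omega⟩
        · by_contra hne
          have h3 : g i ≠ ⟨0, by omega⟩ := by
            intro h; apply hne; rw [h, hi]; rfl
          have h4 := g.injective (h2 (g i) h3)
          rw [h4] at hne
          exact hne rfl
        · rw [h2 i hi]; rfl
    | succ j hj1 ih =>
      intro hM
      obtain ⟨T, hzT, hT, hTs⟩ := ih (by omega)
      exact section_step π hsurj z hz1 hzz hzc hker hsq hcomm j hj1 (by omega) T hzT hT hTs
  by_cases hM : M = 0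
  · subst hM
    exact ⟨⊥, by simpa using hz, fun g => ⟨1, Subgroup.one_mem _, Subsingleton.elim _ _⟩⟩
  · obtain ⟨T, h1, _, h3⟩ := main M (by omega) le_rfl
    exact ⟨T, h1, fun g => h3 g (fun i hi => absurd i.2 (by omega))⟩
/-! ## Part B2: cocycles on the symmetric group -/

/-- The value of a cocycle on an involution is invariant under conjugation. -/
lemma IsC.conj_sq {G : Type*} [Group G] {f : G → G → ZMod 2} (hf : IsC f) (g h : G)
    (hg : g * g = 1) : f (h * g * h⁻¹) (h * g * h⁻¹) = f g g := by
  let x : TwExt f hf := ⟨g, 0⟩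
  let y : TwExt f hf := ⟨h, 0⟩
  have hxx : y * (x * x) * y⁻¹ = x * x := by
    rcases TwExt.ker_π (x * x) (by simp [x, hg]) with h1 | h1
    · rw [h1, mul_one, mul_inv_cancel]
    · rw [h1, ← TwExt.z_central, mul_assoc, mul_inv_cancel, mul_one]
  have h2 : (y * x * y⁻¹) * (y * x * y⁻¹) = x * x := by rw [← hxx]; group
  have h3 := congrArg TwExt.a h2
  rw [TwExt.mul_a, zmod2_add_self, zero_add, TwExt.mul_a, zmod2_add_self, zero_add] at h3
  simpa [x, y] using h3

lemma IsC.sq_of_isConj {G : Type*} [Group G] {f : G → G → ZMod 2} (hf : IsC f) {g g' : G}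
    (hg : g * g = 1) (hc : IsConj g g') : f g' g' = f g g := by
  obtain ⟨c, rfl⟩ := isConj_iff.mp hc
  exact hf.conj_sq g c hg

/-- Coboundaries vanish on involutions. -/
lemma IsB.sq {G : Type*} [Group G] {f : G → G → ZMod 2} (hf : IsB f) (g : G)
    (hg : g * g = 1) : f g g = f 1 1 := by
  obtain ⟨x, hx⟩ := hf
  rw [hx, hx, hg, mul_one, zmod2_add_self, zmod2_add_self]

open Equiv in
lemma isB_perm {M : ℕ} {f : Perm (Fin M) → Perm (Fin M) → ZMod 2} (hf : IsC f)
    (h1 : ∀ a b, a ≠ b → f (swap a b) (swap a b) = f 1 1)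
    (h2 : ∀ a b c d, a ≠ b → a ≠ c → a ≠ d → b ≠ c → b ≠ d → c ≠ d →
      f (swap a b * swap c d) (swap a b * swap c d) = f 1 1) : IsB f := by
  have hsq : ∀ (x : TwExt f hf) (a b : Fin M), a ≠ b → TwExt.π x = swap a b → x * x = 1 := by
    intro x a b hab hx
    have hx' : x.g = swap a b := hx
    ext1
    · rw [TwExt.mul_g, hx', swap_mul_self]; rfl
    · rw [TwExt.mul_a, zmod2_add_self, zero_add, hx', h1 a b hab]; rfl
  have hcomm : ∀ (x y : TwExt f hf) (a b c d : Fin M), a ≠ b → a ≠ c → a ≠ d → b ≠ c → b ≠ d →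
      c ≠ d → TwExt.π x = swap a b → TwExt.π y = swap c d → x * y = y * x := by
    intro x y a b c d hab hac had hbc hbd hcd hx hy
    have hx' : x.g = swap a b := hx
    have hy' : y.g = swap c d := hy
    have hxx := hsq x a b hab hx
    have hyy := hsq y c d hcd hy
    have hdis : Perm.Disjoint (swap a b) (swap c d) := by
      rw [Perm.disjoint_iff_disjoint_support, Perm.support_swap hab, Perm.support_swap hcd]
      simp [hac.symm, had.symm, hbc.symm, hbd.symm]
    have hxy : (x * y) * (x * y) = 1 := by
      ext1
      · rw [TwExt.mul_g, TwExt.mul_g, hx', hy']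
        have := hdis.commute.eq
        calc swap a b * swap c d * (swap a b * swap c d)
            = swap a b * (swap c d * swap a b) * swap c d := by group
          _ = (swap a b * swap a b) * (swap c d * swap c d) := by rw [← this]; group
          _ = 1 := by simp
      · rw [TwExt.mul_a, zmod2_add_self, zero_add, TwExt.mul_g, hx', hy',
          h2 a b c d hab hac had hbc hbd hcd]; rfl
    have ix : x⁻¹ = x := inv_eq_of_mul_eq_one_left hxx
    have iy : y⁻¹ = y := inv_eq_of_mul_eq_one_left hyy
    have ixy : (x * y)⁻¹ = x * y := inv_eq_of_mul_eq_one_left hxy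
    rw [← ixy, mul_inv_rev, ix, iy]
  obtain ⟨T, hzT, hT⟩ := exists_section (TwExt.π : TwExt f hf →* _) TwExt.π_surj TwExt.z rfl
    TwExt.z_sq TwExt.z_ne TwExt.z_central TwExt.ker_π hsq hcomm
  choose t htT ht using hT
  have hu : ∀ s ∈ T, s = t s.g := by
    intro s hs
    rcases TwExt.ker_π (s * (t s.g)⁻¹) (by
      rw [map_mul, map_inv, ht, TwExt.π_apply, mul_inv_cancel]) with h | h
    · exact mul_inv_eq_one.mp h
    · exact absurd (h ▸ T.mul_mem hs (T.inv_mem (htT _))) hzT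
  refine ⟨fun g => (t g).a, fun a b => ?_⟩
  have ht' : ∀ g, (t g).g = g := ht
  have h3 := congrArg TwExt.a (hu _ (T.mul_mem (htT a) (htT b)))
  rw [TwExt.mul_a, TwExt.mul_g, ht', ht'] at h3
  show f a b = (t a).a + (t b).a + (t (a * b)).a
  rw [← h3]
  linear_combination -zmod2_add_self (t a).a - zmod2_add_self (t b).a

open Equiv in
lemma isConj_swap_mul_swap {M : ℕ} {a b c d a' b' c' d' : Fin M}
    (hab : a ≠ b) (hac : a ≠ c) (had : a ≠ d) (hbc : b ≠ c) (hbd : b ≠ d) (hcd : c ≠ d)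
    (hab' : a' ≠ b') (hac' : a' ≠ c') (had' : a' ≠ d') (hbc' : b' ≠ c') (hbd' : b' ≠ d')
    (hcd' : c' ≠ d') : IsConj (swap a b * swap c d) (swap a' b' * swap c' d') := by
  have hdis : Perm.Disjoint (swap a b) (swap c d) := by
    rw [Perm.disjoint_iff_disjoint_support, Perm.support_swap hab, Perm.support_swap hcd]
    simp [hac.symm, had.symm, hbc.symm, hbd.symm]
  have hdis' : Perm.Disjoint (swap a' b') (swap c' d') := by
    rw [Perm.disjoint_iff_disjoint_support, Perm.support_swap hab', Perm.support_swap hcd']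
    simp [hac'.symm, had'.symm, hbc'.symm, hbd'.symm]
  rw [Perm.isConj_iff_cycleType_eq, hdis.cycleType_mul, hdis'.cycleType_mul]
  simp only [(show (swap a b).IsSwap from ⟨a, b, hab, rfl⟩).isCycle.cycleType,
    (show (swap c d).IsSwap from ⟨c, d, hcd, rfl⟩).isCycle.cycleType,
    (show (swap a' b').IsSwap from ⟨a', b', hab', rfl⟩).isCycle.cycleType,
    (show (swap c' d').IsSwap from ⟨c', d', hcd', rfl⟩).isCycle.cycleType,
    Perm.card_support_swap hab, Perm.card_support_swap hcd, Perm.card_support_swap hab',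
    Perm.card_support_swap hcd']

open Equiv in
lemma swap_mul_swap_sq {M : ℕ} {a b c d : Fin M}
    (hac : a ≠ c) (had : a ≠ d) (hbc : b ≠ c) (hbd : b ≠ d) :
    (swap a b * swap c d) * (swap a b * swap c d) = 1 := by
  have : swap a b * swap c d = swap c d * swap a b := by
    by_cases hab : a = b
    · rw [hab, swap_self]; rfl
    by_cases hcd : c = d
    · rw [hcd, swap_self]; rfl
    have hdis : Perm.Disjoint (swap a b) (swap c d) := by
      rw [Perm.disjoint_iff_disjoint_support, Perm.support_swap hab, Perm.support_swap hcd]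
      simp [hac.symm, had.symm, hbc.symm, hbd.symm]
    exact hdis.commute.eq
  nth_rewrite 2 [this]
  rw [mul_assoc, ← mul_assoc (swap c d)]
  simp

open Equiv in
/-- Detection: cocycles on a group containing a symmetric group with odd index. -/
lemma isB_of_sym {M : ℕ} {G : Type*} [Group G] {f : G → G → ZMod 2} (hf : IsC f)
    (J : Perm (Fin M) →* G) (hJ : Function.Injective J) (hodd : Odd J.range.index)
    {a b c d : Fin M}
    (hab : a ≠ b) (hac : a ≠ c) (had : a ≠ d) (hbc : b ≠ c) (hbd : b ≠ d) (hcd : c ≠ d)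
    (h1 : f (J (swap a b)) (J (swap a b)) = f 1 1)
    (h2 : f (J (swap a b * swap c d)) (J (swap a b * swap c d)) = f 1 1) : IsB f := by
  have hf' : IsC (fun g h => f (J g) (J h)) := by
    intro x y w
    simpa using hf (J x) (J y) (J w)
  have hB : IsB (fun g h => f (J g) (J h)) := by
    apply isB_perm hf'
    · intro x y hxy
      rw [hf'.sq_of_isConj (swap_mul_self a b) (Perm.isConj_swap hab hxy)]
      simpa using h1
    · intro x y w v e1 e2 e3 e4 e5 e6
      rw [hf'.sq_of_isConj (swap_mul_swap_sq hac had hbc hbd)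
        (isConj_swap_mul_swap hab hac had hbc hbd hcd e1 e2 e3 e4 e5 e6)]
      simpa only [map_one] using h2
  obtain ⟨x, hx⟩ := hB
  refine isB_of_odd_index hf J.range hodd (fun g => x (Function.invFun J g)) ?_
  rintro _ ⟨s, rfl⟩ _ ⟨t, rfl⟩
  have hinv := Function.leftInverse_invFun hJ
  rw [← map_mul, hinv, hinv, hinv]
  exact hx s t
/-! ## Part C: the spin cocycle, from a Clifford algebra over `𝔽₃` -/

/-- The signed conjugation property. -/
def GoodLift {n : ℕ} {R : Type*} [Ring R] (L W : Fin n → R) (σ : Equiv.Perm (Fin n)) (x : R) :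
    Prop :=
  IsUnit x ∧ (∀ i, x * L i = ((Equiv.Perm.sign σ : ℤ) : R) * (L (σ i) * x)) ∧
    (∀ i, x * W i = ((Equiv.Perm.sign σ : ℤ) : R) * (W i * x))

lemma GoodLift.mul {n : ℕ} {R : Type*} [Ring R] {L W : Fin n → R} {σ τ : Equiv.Perm (Fin n)}
    {x y : R} (hx : GoodLift L W σ x) (hy : GoodLift L W τ y) : GoodLift L W (σ * τ) (x * y) := by
  obtain ⟨ux, hx1, hx2⟩ := hx
  obtain ⟨uy, hy1, hy2⟩ := hy
  have hc : ∀ (m : ℤ) (a b : R), a * ((m : R) * b) = (m : R) * (a * b) := by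
    intro m a b
    rw [← mul_assoc, ← (Int.cast_commute m a).eq, mul_assoc]
  refine ⟨ux.mul uy, fun i => ?_, fun i => ?_⟩
  · rw [mul_assoc, hy1, hc, ← mul_assoc x, hx1, map_mul, Units.val_mul, Int.cast_mul,
      Equiv.Perm.mul_apply]
    simp only [mul_assoc]
    rw [hc]
  · rw [mul_assoc, hy2, hc, ← mul_assoc x, hx2, map_mul, Units.val_mul, Int.cast_mul]
    simp only [mul_assoc]
    rw [hc]

/-- `0 ↦ 1`, `1 ↦ -1`. -/
def eta (R : Type*) [Ring R] (a : ZMod 2) : R := if a = 0 then 1 else -1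

lemma eta_add {R : Type*} [Ring R] (a b : ZMod 2) : eta R (a + b) = eta R a * eta R b := by
  have key : ∀ c : ZMod 2, c = 0 ∨ c = 1 := by decide
  rcases key a with rfl | rfl <;> rcases key b with rfl | rfl <;>
    simp [eta, show (1 : ZMod 2) + 1 = 0 by decide]

lemma eta_comm {R : Type*} [Ring R] (a : ZMod 2) (x : R) : eta R a * x = x * eta R a := by
  unfold eta; split_ifs <;> simp

lemma eta_inj {R : Type*} [Ring R] (h : (1 : R) ≠ -1) {a b : ZMod 2} (hab : eta R a = eta R b) :
    a = b := by
  have key : ∀ c : ZMod 2, c = 0 ∨ c = 1 := by decide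
  rcases key a with rfl | rfl <;> rcases key b with rfl | rfl <;>
    simp [eta] at hab ⊢
  · exact h hab
  · exact h hab.symm

open Equiv in
/-- The spin cocycle from abstract Clifford data. -/
lemma spin_of_clifford {n : ℕ} {R : Type*} [Ring R] (L W : Fin n → R) (h3 : (3 : R) = 0)
    (hne : (1 : R) ≠ -1) (hL : ∀ i, L i * L i = 1) (hLL : ∀ i j, i ≠ j → L i * L j = -(L j * L i))
    (hWL : ∀ i j, W i * L j = -(L j * W i))
    (hcomm : ∀ x : R, (∀ i, x * L i = L i * x) → (∀ i, x * W i = W i * x) →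
      x = 0 ∨ x = 1 ∨ x = -1) :
    ∃ c : Perm (Fin n) → Perm (Fin n) → ZMod 2, IsC c ∧
      ∀ i j k l, i ≠ j → i ≠ k → i ≠ l → j ≠ k → j ≠ l → k ≠ l →
        c (swap i j * swap k l) (swap i j * swap k l) = c 1 1 + 1 := by
  have hnt : (1 : R) ≠ 0 := by
    intro h
    apply hne
    rw [h, neg_zero]
  have hsq : ∀ i j, i ≠ j → (L i - L j) * (L i - L j) = -1 := by
    intro i j hij
    have : (L i - L j) * (L i - L j) = L i * L i - L i * L j - L j * L i + L j * L j := by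
      noncomm_ring
    rw [this, hL, hL, hLL i j hij]
    have h3' : (1 : R) + 1 = -1 := by
      rw [eq_neg_iff_add_eq_zero, ← h3]; norm_num
    rw [← h3']; noncomm_ring
  have hswap : ∀ i j, i ≠ j → GoodLift L W (swap i j) (L i - L j) := by
    intro i j hij
    have hs := hsq i j hij
    refine ⟨⟨⟨L i - L j, -(L i - L j), ?_, ?_⟩, rfl⟩, fun l => ?_, fun l => ?_⟩
    · rw [mul_neg, hs, neg_neg]
    · rw [neg_mul, hs, neg_neg]
    · rw [Perm.sign_swap hij]
      simp only [Units.val_neg, Units.val_one, Int.cast_neg, Int.cast_one, neg_mul, one_mul]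
      by_cases hli : l = i
      · subst hli
        rw [swap_apply_left, sub_mul, mul_sub, hL, hL]
        abel
      by_cases hlj : l = j
      · subst hlj
        rw [swap_apply_right, sub_mul, mul_sub, hL, hL]
        abel
      rw [swap_apply_of_ne_of_ne hli hlj, sub_mul, mul_sub, hLL i l (Ne.symm hli),
        hLL j l (Ne.symm hlj)]
      abel
    · rw [Perm.sign_swap hij]
      simp only [Units.val_neg, Units.val_one, Int.cast_neg, Int.cast_one, neg_mul, one_mul]
      rw [mul_sub, sub_mul, hWL, hWL]
      abel
  have hone : GoodLift L W 1 1 := ⟨isUnit_one, by simp, by simp⟩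
  have hex : ∀ σ : Perm (Fin n), ∃ x, GoodLift L W σ x := by
    intro σ
    induction σ using Perm.swap_induction_on with
    | one => exact ⟨1, hone⟩
    | swap_mul f x y hxy ih =>
      obtain ⟨w, hw⟩ := ih
      exact ⟨_, (hswap x y hxy).mul hw⟩
  -- uniqueness up to sign
  have huniq : ∀ σ x y, GoodLift L W σ x → GoodLift L W σ y → ∃ e : ZMod 2, x = eta R e * y := by
    rintro σ x y ⟨_, hx1, hx2⟩ ⟨⟨u, rfl⟩, hy1, hy2⟩
    have hss : ((Perm.sign σ : ℤ) : R) * ((Perm.sign σ : ℤ) : R) = 1 := by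
      rw [← Int.cast_mul, ← Units.val_mul, Int.units_mul_self]; simp
    have hcs : ∀ a : R, ((Perm.sign σ : ℤ) : R) * a = a * ((Perm.sign σ : ℤ) : R) :=
      fun a => (Int.cast_commute _ a).eq
    -- `u⁻¹ x` commutes with everything
    have gen : ∀ A B : R, x * A = ((Perm.sign σ : ℤ) : R) * (B * x) →
        (u : R) * A = ((Perm.sign σ : ℤ) : R) * (B * u) → (↑u⁻¹ * x) * A = A * (↑u⁻¹ * x) := by
      intro A B h1 h2
      have h4 : B = ((Perm.sign σ : ℤ) : R) * (u * A * ↑u⁻¹) := by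
        rw [h2]
        rw [mul_assoc _ (B * (u : R)), mul_assoc B, Units.mul_inv, mul_one, ← mul_assoc, hss,
          one_mul]
      rw [mul_assoc, h1, h4]
      calc (↑u⁻¹ : R) * (((Perm.sign σ : ℤ) : R) * (((Perm.sign σ : ℤ) : R) * (u * A * ↑u⁻¹) * x))
          = ↑u⁻¹ * ((((Perm.sign σ : ℤ) : R) * ((Perm.sign σ : ℤ) : R)) * (u * A * ↑u⁻¹ * x)) := by
            simp only [mul_assoc]
        _ = (↑u⁻¹ * u) * A * (↑u⁻¹ * x) := by rw [hss, one_mul]; simp only [mul_assoc]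
        _ = A * (↑u⁻¹ * x) := by rw [Units.inv_mul, one_mul]
    have hx : x = u * (↑u⁻¹ * x) := by rw [← mul_assoc, Units.mul_inv, one_mul]
    rcases hcomm (↑u⁻¹ * x) (fun i => gen _ _ (hx1 i) (hy1 i)) (fun i => gen _ _ (hx2 i) (hy2 i))
      with h | h | h
    · exfalso
      rw [h, mul_zero] at hx
      rename_i hu
      rw [hx] at hu
      exact hnt (isUnit_zero_iff.mp hu).symm
    · exact ⟨0, by rw [hx, h]; simp [eta]⟩
    · exact ⟨1, by rw [hx, h]; simp [eta]⟩
  choose s hs using hex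
  choose c hc using fun σ τ => huniq (σ * τ) (s σ * s τ) (s (σ * τ)) ((hs σ).mul (hs τ)) (hs _)
  have hcancel : ∀ σ e e', eta R e * s σ = eta R e' * s σ → e = e' := by
    intro σ e e' h
    exact eta_inj hne ((hs σ).1.mul_right_cancel h)
  refine ⟨c, ?_, ?_⟩
  · intro a b d
    apply hcancel (a * b * d)
    have h1 : s a * s b * s d = eta R (c (a * b) d + c a b) * s (a * b * d) := by
      rw [hc, mul_assoc, hc, ← mul_assoc, ← eta_add, add_comm]
    have h2 : s a * (s b * s d) = eta R (c b d + c a (b * d)) * s (a * b * d) := by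
      rw [hc, ← mul_assoc, ← eta_comm, mul_assoc, hc, ← mul_assoc, ← eta_add, ← mul_assoc a]
    rw [← h1, ← h2, mul_assoc]
  · intro i j k l hij hik hil hjk hjl hkl
    set g := swap i j * swap k l with hg
    have hgg : g * g = 1 := swap_mul_swap_sq hik hil hjk hjl
    have hgx := (hswap i j hij).mul (hswap k l hkl)
    obtain ⟨e, he⟩ := huniq g (s g) _ (hs g) hgx
    have hee : ∀ e : ZMod 2, eta R e * eta R e = 1 := by
      intro e; rw [← eta_add, zmod2_add_self]; simp [eta]
    have hanti : (L k - L l) * (L i - L j) = -((L i - L j) * (L k - L l)) := by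
      simp only [mul_sub, sub_mul]
      rw [hLL k i (Ne.symm hik), hLL k j (Ne.symm hjk), hLL l i (Ne.symm hil),
        hLL l j (Ne.symm hjl)]
      abel
    have hxx : ((L i - L j) * (L k - L l)) * ((L i - L j) * (L k - L l)) = -1 := by
      calc ((L i - L j) * (L k - L l)) * ((L i - L j) * (L k - L l))
          = (L i - L j) * ((L k - L l) * (L i - L j)) * (L k - L l) := by simp only [mul_assoc]
        _ = -(((L i - L j) * (L i - L j)) * ((L k - L l) * (L k - L l))) := by
          rw [hanti]; simp only [mul_neg, neg_mul, mul_assoc]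
        _ = -1 := by rw [hsq i j hij, hsq k l hkl]; simp
    have hs2 : s g * s g = -1 := by
      rw [he]
      calc eta R e * ((L i - L j) * (L k - L l)) * (eta R e * ((L i - L j) * (L k - L l)))
          = eta R e * (((L i - L j) * (L k - L l)) * eta R e) * ((L i - L j) * (L k - L l)) := by
            simp only [mul_assoc]
        _ = (eta R e * eta R e) * (((L i - L j) * (L k - L l)) * ((L i - L j) * (L k - L l))) := by
            rw [← eta_comm]; simp only [mul_assoc]
        _ = -1 := by rw [hee, hxx, one_mul]
    obtain ⟨e1, he1⟩ := huniq 1 (s 1) 1 (hs 1) hone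
    rw [mul_one] at he1
    have h11 := hc 1 1
    rw [mul_one, he1, hee] at h11
    have hgg' := hc g g
    rw [hgg, hs2, he1] at hgg'
    apply hcancel 1
    rw [he1, ← hgg', eta_add, eta_comm (c 1 1), mul_assoc, ← h11]
    simp [eta]

/-- The additive character `ZMod 2 → {±1} ⊆ ZMod 3`. -/
def chi (a : ZMod 2) : ZMod 3 := if a = 0 then 1 else -1

lemma chi_add : ∀ a b, chi (a + b) = chi a * chi b := by decide
lemma chi_one : chi 1 = -1 := by decide
lemma chi_zero : chi 0 = 1 := by decide
lemma chi_mul_self : ∀ a, chi a * chi a = 1 := by decide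
lemma chi_inj : ∀ a b, a ≠ b → ∀ t : ZMod 3, chi a * t = chi b * t → t = 0 := by decide

/-- Partial sums. -/
def psum {n : ℕ} (i : Fin n) (a : Fin n → ZMod 2) : ZMod 2 := ∑ j, if j < i then a j else 0

lemma psum_add {n : ℕ} (i l : Fin n) (a : Fin n → ZMod 2) :
    psum i (a + Pi.single l 1) = psum i a + if l < i then 1 else 0 := by
  unfold psum
  have : ∀ j, (if j < i then (a + Pi.single l 1 : Fin n → ZMod 2) j else 0) =
      (if j < i then a j else 0) + if j = l then (if l < i then 1 else 0) else 0 := by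
    intro j
    by_cases hj : j = l
    · subst hj; by_cases h : j < i <;> simp [h]
    · simp [hj]
  rw [Finset.sum_congr rfl (fun j _ => this j), Finset.sum_add_distrib]
  simp

/-- Clifford generators acting on `𝔽₃`-valued functions on `𝔽₂ⁿ`. -/
def cliffL {n : ℕ} (i : Fin n) : Module.End (ZMod 3) ((Fin n → ZMod 2) → ZMod 3) where
  toFun f a := chi (psum i a) * f (a + Pi.single i 1)
  map_add' f g := by ext a; simp [mul_add]
  map_smul' r f := by ext a; simp [mul_left_comm]

/-- The second family of Clifford generators. -/
def cliffW {n : ℕ} (i : Fin n) : Module.End (ZMod 3) ((Fin n → ZMod 2) → ZMod 3) where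
  toFun f a := chi (psum i a + a i) * f (a + Pi.single i 1)
  map_add' f g := by ext a; simp [mul_add]
  map_smul' r f := by ext a; simp [mul_left_comm]

lemma cliffL_apply {n : ℕ} (i : Fin n) (f : (Fin n → ZMod 2) → ZMod 3) (a) :
    cliffL i f a = chi (psum i a) * f (a + Pi.single i 1) := rfl
lemma cliffW_apply {n : ℕ} (i : Fin n) (f : (Fin n → ZMod 2) → ZMod 3) (a) :
    cliffW i f a = chi (psum i a + a i) * f (a + Pi.single i 1) := rfl

lemma add_single_self {n : ℕ} (i : Fin n) (a : Fin n → ZMod 2) :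
    a + Pi.single i 1 + Pi.single i 1 = a := by
  rw [add_assoc, ← Pi.single_add, zmod2_add_self, Pi.single_zero, add_zero]

lemma cliffL_sq {n : ℕ} (i : Fin n) : (cliffL i * cliffL i : Module.End (ZMod 3) _) = 1 := by
  refine LinearMap.ext fun f => funext fun a => ?_
  simp only [Module.End.mul_apply, cliffL_apply, psum_add, lt_irrefl, if_false, add_zero,
    add_single_self, ← mul_assoc, chi_mul_self, one_mul, Module.End.one_apply]

lemma cliffL_anti {n : ℕ} (i j : Fin n) (hij : i ≠ j) :
    (cliffL i * cliffL j : Module.End (ZMod 3) _) = -(cliffL j * cliffL i) := by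
  refine LinearMap.ext fun f => funext fun a => ?_
  simp only [Module.End.mul_apply, cliffL_apply, psum_add, LinearMap.neg_apply, Pi.neg_apply,
    chi_add, add_right_comm a (Pi.single j 1) (Pi.single i 1)]
  rcases lt_or_gt_of_ne hij with h | h
  · simp only [h, h.not_gt, if_true, if_false, chi_one, chi_zero]; ring
  · simp only [h, h.not_gt, if_true, if_false, chi_one, chi_zero]; ring

lemma cliffWL {n : ℕ} (i j : Fin n) :
    (cliffW i * cliffL j : Module.End (ZMod 3) _) = -(cliffL j * cliffW i) := by
  refine LinearMap.ext fun f => funext fun a => ?_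
  simp only [Module.End.mul_apply, cliffL_apply, cliffW_apply, psum_add, LinearMap.neg_apply,
    Pi.neg_apply, chi_add, add_right_comm a (Pi.single j 1) (Pi.single i 1), Pi.add_apply]
  rcases lt_trichotomy i j with h | h | h
  · simp only [h, h.not_gt, if_true, if_false, chi_one, chi_zero, Pi.single_apply, h.ne]; ring
  · subst h
    simp only [lt_irrefl, if_true, if_false, chi_one, chi_zero, Pi.single_apply]; ring
  · simp only [h, h.not_gt, if_true, if_false, chi_one, chi_zero, Pi.single_apply, h.ne']; ring

lemma cliff_commutant {n : ℕ} (x : Module.End (ZMod 3) ((Fin n → ZMod 2) → ZMod 3))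
    (hL : ∀ i, x * cliffL i = cliffL i * x) (hW : ∀ i, x * cliffW i = cliffW i * x) :
    x = 0 ∨ x = 1 ∨ x = -1 := by
  classical
  -- commutes with the diagonal operators
  have hD : ∀ i f a, x (fun b => chi (b i) * f b) a = chi (a i) * x f a := by
    intro i f a
    have hWLa : ∀ (g : (Fin n → ZMod 2) → ZMod 3) (b), (cliffW i * cliffL i) g b =
        chi (b i) * g b := by
      intro g b
      simp only [Module.End.mul_apply, cliffL_apply, cliffW_apply, psum_add, lt_irrefl, if_false,
        add_zero, add_single_self, chi_add]
      linear_combination (chi (b i) * g b) * chi_mul_self (psum i b)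
    have h1 : x * (cliffW i * cliffL i) = (cliffW i * cliffL i) * x := by
      rw [← mul_assoc, hW, mul_assoc, hL, mul_assoc]
    have h2 : x ((cliffW i * cliffL i) f) a = (cliffW i * cliffL i) (x f) a :=
      congrFun (LinearMap.congr_fun h1 f) a
    rw [hWLa, show (cliffW i * cliffL i) f = fun b => chi (b i) * f b from
      funext (hWLa f)] at h2
    exact h2
  -- diagonal
  have hdiag : ∀ b a, a ≠ b → x (Pi.single b 1) a = 0 := by
    intro b a hab
    obtain ⟨i, hi⟩ := Function.ne_iff.mp hab
    have h1 := hD i (Pi.single b 1) a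
    have h2 : (fun c : Fin n → ZMod 2 => chi (c i) * (Pi.single b 1 : _ → ZMod 3) c) =
        chi (b i) • (Pi.single b 1 : _ → ZMod 3) := by
      funext c
      by_cases hc : c = b
      · subst hc; simp
      · simp [hc]
    rw [h2, map_smul, Pi.smul_apply, smul_eq_mul] at h1
    exact chi_inj _ _ hi _ h1.symm
  -- constant diagonal
  have hshift : ∀ i b, x (Pi.single (b + Pi.single i 1) 1) (b + Pi.single i 1) =
      x (Pi.single b 1) b := by
    intro i b
    have h1 := congrFun (LinearMap.congr_fun (hL i) (Pi.single (b + Pi.single i 1) 1)) b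
    rw [Module.End.mul_apply, Module.End.mul_apply, cliffL_apply] at h1
    have h2 : cliffL i (Pi.single (b + Pi.single i 1) 1) =
        chi (psum i b) • (Pi.single b 1 : _ → ZMod 3) := by
      funext c
      rw [cliffL_apply]
      by_cases hc : c = b
      · subst hc; simp
      · have : c + Pi.single i 1 ≠ b + Pi.single i 1 := fun h => hc (add_right_cancel h)
        simp [hc]
    rw [h2, map_smul, Pi.smul_apply, smul_eq_mul] at h1
    have h3 := chi_mul_self (psum i b)
    linear_combination chi (psum i b) * (-h1) - (x (Pi.single (b + Pi.single i 1) 1)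
      (b + Pi.single i 1) - x (Pi.single b 1) b) * h3
  let Inv : AddSubmonoid (Fin n → ZMod 2) :=
    { carrier := {c | ∀ b, x (Pi.single (b + c) 1) (b + c) = x (Pi.single b 1) b}
      zero_mem' := by intro b; simp
      add_mem' := by
        intro c d hc hd b
        rw [← add_assoc, hd, hc] }
  have hall : ∀ b, x (Pi.single b 1) b = x (Pi.single 0 1) 0 := by
    intro b
    have hb : b ∈ Inv := by
      rw [← Finset.univ_sum_single b]
      refine Inv.sum_mem fun i _ => ?_
      have key : ∀ c : ZMod 2, c = 0 ∨ c = 1 := by decide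
      rcases key (b i) with h | h
      · rw [h, Pi.single_zero]; exact Inv.zero_mem
      · rw [h]; exact hshift i
    have := hb 0
    rwa [zero_add] at this
  set r := x (Pi.single 0 1) 0 with hr
  have hx : x = r • (1 : Module.End (ZMod 3) ((Fin n → ZMod 2) → ZMod 3)) := by
    refine LinearMap.pi_ext' fun b => LinearMap.ext_ring ?_
    funext a
    simp only [LinearMap.comp_apply, LinearMap.single_apply, LinearMap.smul_apply,
      Module.End.one_apply, Pi.smul_apply, smul_eq_mul]
    by_cases hab : a = b
    · subst hab; rw [hall]; simp
    · rw [hdiag b a hab]; simp [hab]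
  have key : ∀ c : ZMod 3, c = 0 ∨ c = 1 ∨ c = -1 := by decide
  rcases key r with h | h | h <;> rw [h] at hx
  · left; rw [hx, zero_smul]
  · right; left; rw [hx, one_smul]
  · right; right; rw [hx]; refine LinearMap.ext fun f => funext fun a => ?_; simp

open Equiv in
lemma exists_spin (n : ℕ) : ∃ c : Perm (Fin n) → Perm (Fin n) → ZMod 2, IsC c ∧
    ∀ i j k l, i ≠ j → i ≠ k → i ≠ l → j ≠ k → j ≠ l → k ≠ l →
      c (swap i j * swap k l) (swap i j * swap k l) = c 1 1 + 1 := by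
  refine spin_of_clifford (R := Module.End (ZMod 3) ((Fin n → ZMod 2) → ZMod 3)) cliffL cliffW
    ?_ ?_ cliffL_sq cliffL_anti cliffWL cliff_commutant
  · refine LinearMap.ext fun f => funext fun a => ?_
    have h : (3 : Module.End (ZMod 3) ((Fin n → ZMod 2) → ZMod 3)) = ((3 : ZMod 3)) • 1 := by
      rw [show (3 : Module.End (ZMod 3) ((Fin n → ZMod 2) → ZMod 3)) = 1 + 1 + 1 by norm_num,
        show (3 : ZMod 3) = 1 + 1 + 1 by decide, add_smul, add_smul, one_smul]
    rw [h, show (3 : ZMod 3) = 0 by decide, zero_smul]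
  · intro h
    have := congrFun (LinearMap.congr_fun h (fun _ => (1 : ZMod 3))) 0
    simp only [Module.End.one_apply, LinearMap.neg_apply, Pi.neg_apply] at this
    have h2 : (1 : ZMod 3) ≠ -1 := by decide
    exact h2 this
/-! ## Part E: representation-theoretic plumbing -/

open CategoryTheory in
/-- `H²` with trivial coefficients, computed by a complete system of functionals on cocycles. -/
lemma finrank_H2_trivial {S : Type} [Group S] {n : ℕ}
    (Φ : (S → S → ZMod 2) →ₗ[ZMod 2] (Fin n → ZMod 2))
    (hΦ : ∀ f, IsC f → (IsB f ↔ Φ f = 0))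
    (hsurj : ∀ v, ∃ f, IsC f ∧ Φ f = v) :
    Module.finrank (ZMod 2) (groupCohomology (Rep.trivial (ZMod 2) S (ZMod 2)) 2) = n := by
  let A := Rep.trivial (ZMod 2) S (ZMod 2)
  let Z := groupCohomology.cocycles₂ A
  let p : Z →ₗ[ZMod 2] groupCohomology A 2 := (groupCohomology.H2π A).hom
  have hp : Function.Surjective p := (ModuleCat.epi_iff_surjective _).1 inferInstance
  let cur : Z →ₗ[ZMod 2] (S → S → ZMod 2) :=
    { toFun := fun f a b => f.1 (a, b)
      map_add' := fun _ _ => rfl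
      map_smul' := fun _ _ => rfl }
  have hcur : ∀ f : Z, IsC (cur f) := fun f a b c =>
    (groupCohomology.mem_cocycles₂_iff (A := A) f.1).1 f.2 a b c
  let q : Z →ₗ[ZMod 2] (Fin n → ZMod 2) := Φ ∘ₗ cur
  have hq : Function.Surjective q := by
    intro v
    obtain ⟨f, hf, hfv⟩ := hsurj v
    exact ⟨⟨fun x => f x.1 x.2, (groupCohomology.mem_cocycles₂_iff (A := A) _).2 hf⟩, hfv⟩
  have hker : LinearMap.ker p = LinearMap.ker q := by
    ext f
    have h1 : p f = 0 ↔ IsB (cur f) := by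
      refine (groupCohomology.H2π_eq_zero_iff (A := A) f).trans ⟨?_, ?_⟩
      · rintro ⟨x, hx⟩
        refine ⟨x, fun a b => ?_⟩
        have h2 : x b - x (a * b) + x a = f.1 (a, b) := congrFun hx (a, b)
        show f.1 (a, b) = _
        rw [← h2, sub_eq_add_neg, ZMod.neg_eq_self_mod_two]
        ring
      · rintro ⟨x, hx⟩
        refine ⟨x, funext fun ab => ?_⟩
        obtain ⟨a, b⟩ := ab
        show x b - x (a * b) + x a = f.1 (a, b)
        have h2 : f.1 (a, b) = _ := hx a b
        rw [h2, sub_eq_add_neg, ZMod.neg_eq_self_mod_two]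
        ring
    rw [LinearMap.mem_ker, LinearMap.mem_ker, h1]
    exact hΦ _ (hcur f)
  have e1 := p.quotKerEquivOfSurjective hp
  have e2 := q.quotKerEquivOfSurjective hq
  rw [← hker] at e2
  have := (e1.symm.trans e2).finrank_eq
  rw [Module.finrank_fin_fun] at this
  exact this

/-- Shapiro for permutation modules. -/
lemma finrank_H2_permRep {K X : Type} [Group K] [MulAction K X] [MulAction.IsPretransitive K X]
    (x0 : X) :
    Module.finrank (ZMod 2) (groupCohomology (Rep.of (permRep (ZMod 2) K X)) 2) =
      Module.finrank (ZMod 2) (groupCohomology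
        (Rep.trivial (ZMod 2) (MulAction.stabilizer K x0) (ZMod 2)) 2) := by
  let S := MulAction.stabilizer K x0
  let A := Rep.trivial (ZMod 2) S (ZMod 2)
  choose t ht using fun x : X => MulAction.exists_smul_eq K x x0
  let e : (X → ZMod 2) ≃ₗ[ZMod 2] Representation.coindV S.subtype A.ρ :=
    { toFun := fun v => ⟨fun g => v (g⁻¹ • x0), by
        intro h g
        show v ((S.subtype h * g)⁻¹ • x0) = v (g⁻¹ • x0)
        have : (h : K)⁻¹ • x0 = x0 := by rw [inv_smul_eq_iff]; exact h.2.symm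
        rw [mul_inv_rev, mul_smul]
        exact congrArg (fun y => v (g⁻¹ • y)) this⟩
      map_add' := fun _ _ => rfl
      map_smul' := fun _ _ => rfl
      invFun := fun f x => f.1 (t x)
      left_inv := by
        intro v
        funext x
        show v ((t x)⁻¹ • x0) = v x
        rw [← ht x, inv_smul_smul]
      right_inv := by
        intro f
        refine Subtype.ext (funext fun g => ?_)
        show f.1 (t (g⁻¹ • x0)) = f.1 g
        have hm : t (g⁻¹ • x0) * g⁻¹ ∈ S := by
          rw [MulAction.mem_stabilizer_iff, mul_smul]; exact ht _
        have h2 : f.1 (t (g⁻¹ • x0) * g⁻¹ * g) = f.1 g := f.2 ⟨_, hm⟩ g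
        rwa [inv_mul_cancel_right] at h2 }
  let E : (permRep (ZMod 2) K X).Equiv (Representation.coind S.subtype A.ρ) :=
    Representation.Equiv.mk e (by
      intro g
      refine LinearMap.ext fun v => Subtype.ext (funext fun h => ?_)
      show v (g⁻¹ • h⁻¹ • x0) = v ((h * g)⁻¹ • x0)
      rw [mul_inv_rev, mul_smul])
  have i1 := (groupCohomology.functor (ZMod 2) K 2).mapIso (Rep.mkIso E)
  have i2 := groupCohomology.coindIso A 2
  exact (i1.toLinearEquiv.trans i2.toLinearEquiv).finrank_eq

/-- Linear algebra of a split sequence. -/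
lemma finrank_of_split {L M N : Type*} [AddCommGroup L] [AddCommGroup M] [AddCommGroup N]
    [Module (ZMod 2) L] [Module (ZMod 2) M] [Module (ZMod 2) N]
    (f : L →ₗ[ZMod 2] M) (r : M →ₗ[ZMod 2] L) (g : M →ₗ[ZMod 2] N) (s : N →ₗ[ZMod 2] M)
    (hfr : ∀ u, r (f u) = u) (hsg : ∀ w, g (s w) = w)
    (hgf : ∀ u, g (f u) = 0) (hrs : ∀ w, r (s w) = 0) (hid : ∀ v, f (r v) + s (g v) = v)
    {n : ℕ} (hn : 0 < n) (hdim : Module.finrank (ZMod 2) M = n) :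
    n = Module.finrank (ZMod 2) L + Module.finrank (ZMod 2) N := by
  let e : M ≃ₗ[ZMod 2] L × N :=
    LinearEquiv.ofLinearMap (r.prod g) (f.coprod s) (by
        refine LinearMap.prod_ext (LinearMap.ext fun u => ?_) (LinearMap.ext fun w => ?_)
        · simp [hfr, hgf]
        · simp [hsg, hrs]) (LinearMap.ext fun v => by simpa using hid v)
  have hfd : Module.Finite (ZMod 2) M :=
    Module.finite_of_finrank_pos (by rw [hdim]; exact hn)
  have hfd2 : Module.Finite (ZMod 2) (L × N) := Module.Finite.equiv e
  have hfa : Module.Finite (ZMod 2) L :=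
    Module.Finite.of_surjective (LinearMap.fst (ZMod 2) L N) LinearMap.fst_surjective
  have hfc : Module.Finite (ZMod 2) N :=
    Module.Finite.of_surjective (LinearMap.snd (ZMod 2) L N) LinearMap.snd_surjective
  rw [← hdim, e.finrank_eq, Module.finrank_prod]

open CategoryTheory in
/-- Additivity of `H²` on a split sequence. -/
lemma finrank_H2_split {K : Type} [Group K] {U V W : Type} [AddCommGroup U] [Module (ZMod 2) U]
    [AddCommGroup V] [Module (ZMod 2) V] [AddCommGroup W] [Module (ZMod 2) W]
    {α : Representation (ZMod 2) K U} {β : Representation (ZMod 2) K V}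
    {γ : Representation (ZMod 2) K W}
    (f : α.IntertwiningMap β) (r : β.IntertwiningMap α) (g : β.IntertwiningMap γ)
    (s : γ.IntertwiningMap β) (hfr : ∀ u, r (f u) = u) (hsg : ∀ w, g (s w) = w)
    (hgf : ∀ u, g (f u) = 0) (hrs : ∀ w, r (s w) = 0) (hid : ∀ v, f (r v) + s (g v) = v)
    {n : ℕ} (hn : 0 < n)
    (hdim : Module.finrank (ZMod 2) (groupCohomology (Rep.of β) 2) = n) :
    n = Module.finrank (ZMod 2) (groupCohomology (Rep.of α) 2) +
      Module.finrank (ZMod 2) (groupCohomology (Rep.of γ) 2) := by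
  let T : Rep (ZMod 2) K ⥤ ModuleCat (ZMod 2) := groupCohomology.cochainsFunctor (ZMod 2) K ⋙
    HomologicalComplex.homologyFunctor _ _ 2
  let f1 : Rep.of α ⟶ Rep.of β := Rep.ofHom f
  let r1 : Rep.of β ⟶ Rep.of α := Rep.ofHom r
  let g1 : Rep.of β ⟶ Rep.of γ := Rep.ofHom g
  let s1 : Rep.of γ ⟶ Rep.of β := Rep.ofHom s
  have e1 : f1 ≫ r1 = 𝟙 _ := by ext u; exact hfr u
  have e2 : s1 ≫ g1 = 𝟙 _ := by ext u; exact hsg u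
  have e3 : f1 ≫ g1 = 0 := by ext u; exact hgf u
  have e4 : s1 ≫ r1 = 0 := by ext u; exact hrs u
  have e5 : r1 ≫ f1 + g1 ≫ s1 = 𝟙 _ := by ext u; exact hid u
  have k1 : T.map f1 ≫ T.map r1 = 𝟙 _ := by rw [← T.map_comp, e1, T.map_id]
  have k2 : T.map s1 ≫ T.map g1 = 𝟙 _ := by rw [← T.map_comp, e2, T.map_id]
  have k3 : T.map f1 ≫ T.map g1 = 0 := by rw [← T.map_comp, e3, T.map_zero]
  have k4 : T.map s1 ≫ T.map r1 = 0 := by rw [← T.map_comp, e4, T.map_zero]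
  have k5 : T.map r1 ≫ T.map f1 + T.map g1 ≫ T.map s1 = 𝟙 _ := by
    rw [← T.map_comp, ← T.map_comp, ← T.map_add, e5, T.map_id]
  exact finrank_of_split (M := groupCohomology (Rep.of β) 2) (T.map f1).hom (T.map r1).hom
    (T.map g1).hom (T.map s1).hom (fun u => congrArg (fun h => h.hom u) k1)
    (fun u => congrArg (fun h => h.hom u) k2) (fun u => congrArg (fun h => h.hom u) k3)
    (fun u => congrArg (fun h => h.hom u) k4) (fun u => congrArg (fun h => h.hom u) k5) hn hdim
/-! ## Part F: splitting the permutation module on 2-subsets -/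

/-- The map from points to pairs. -/
def thetaMap (k : ℕ) : (Fin k → ZMod 2) →ₗ[ZMod 2] (Xk k → ZMod 2) where
  toFun v s := ∑ i, if i ∈ s.1 then 0 else v i
  map_add' v w := by
    funext s
    simp only [Pi.add_apply, ← Finset.sum_add_distrib]
    exact Finset.sum_congr rfl fun i _ => by split_ifs <;> simp
  map_smul' c v := by
    funext s
    simp only [Pi.smul_apply, smul_eq_mul, Finset.mul_sum, RingHom.id_apply]
    exact Finset.sum_congr rfl fun i _ => by split_ifs <;> simp

/-- The transposed map from pairs to points. -/
def thetaT (k : ℕ) : (Xk k → ZMod 2) →ₗ[ZMod 2] (Fin k → ZMod 2) where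
  toFun v i := ∑ s : Xk k, if i ∈ s.1 then 0 else v s
  map_add' v w := by
    funext s
    simp only [Pi.add_apply, ← Finset.sum_add_distrib]
    exact Finset.sum_congr rfl fun i _ => by split_ifs <;> simp
  map_smul' c v := by
    funext s
    simp only [Pi.smul_apply, smul_eq_mul, Finset.mul_sum, RingHom.id_apply]
    exact Finset.sum_congr rfl fun i _ => by split_ifs <;> simp

lemma thetaMap_apply (k : ℕ) (v : Fin k → ZMod 2) (s : Xk k) :
    thetaMap k v s = ∑ i, if i ∈ s.1 then 0 else v i := rfl

lemma thetaT_apply (k : ℕ) (v : Xk k → ZMod 2) (i : Fin k) :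
    thetaT k v i = ∑ s : Xk k, if i ∈ s.1 then 0 else v s := rfl

lemma mem_smul_Xk {k : ℕ} (g : alternatingGroup (Fin k)) (i : Fin k) (s : Xk k) :
    g • i ∈ (g • s : Xk k).1 ↔ i ∈ s.1 :=
  Finset.smul_mem_smul_finset_iff (g : Equiv.Perm (Fin k))

/-- `thetaMap` as an intertwining map. -/
def thetaI (k : ℕ) : (permRep (ZMod 2) (alternatingGroup (Fin k)) (Fin k)).IntertwiningMap
    (permRep (ZMod 2) (alternatingGroup (Fin k)) (Xk k)) where
  toLinearMap := thetaMap k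
  isIntertwining' g := by
    refine LinearMap.ext fun v => funext fun s => ?_
    show (∑ i, if i ∈ s.1 then 0 else v (g⁻¹ • i)) =
      ∑ i, if i ∈ (g⁻¹ • s : Xk k).1 then 0 else v i
    refine Fintype.sum_equiv (MulAction.toPerm g⁻¹) _ _ fun i => ?_
    rw [MulAction.toPerm_apply]
    simp only [mem_smul_Xk]

/-- `thetaT` as an intertwining map. -/
def thetaTI (k : ℕ) : (permRep (ZMod 2) (alternatingGroup (Fin k)) (Xk k)).IntertwiningMap
    (permRep (ZMod 2) (alternatingGroup (Fin k)) (Fin k)) where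
  toLinearMap := thetaT k
  isIntertwining' g := by
    refine LinearMap.ext fun v => funext fun i => ?_
    show (∑ s : Xk k, if i ∈ s.1 then 0 else v (g⁻¹ • s)) =
      ∑ s : Xk k, if g⁻¹ • i ∈ s.1 then 0 else v s
    refine Fintype.sum_equiv (MulAction.toPerm g⁻¹) _ _ fun s => ?_
    rw [MulAction.toPerm_apply]
    simp only [mem_smul_Xk]

lemma card_avoid (k : ℕ) (i j : Fin k) :
    (Finset.univ.filter fun s : Xk k => ¬ (i ∈ s.1) ∧ ¬ (j ∈ s.1)).card =
      (k - ({i, j} : Finset (Fin k)).card).choose 2 := by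
  have h1 : ((({i, j} : Finset (Fin k))ᶜ).powersetCard 2).card =
      (k - ({i, j} : Finset (Fin k)).card).choose 2 := by
    rw [Finset.card_powersetCard, Finset.card_compl, Fintype.card_fin]
  rw [← h1]
  refine Finset.card_bij (fun s _ => s.1) ?_ ?_ ?_
  · intro s hs
    rw [Finset.mem_filter] at hs
    rw [Finset.mem_powersetCard]
    refine ⟨fun a ha => ?_, s.2⟩
    rw [Finset.mem_compl, Finset.mem_insert, Finset.mem_singleton]
    rintro (rfl | rfl)
    · exact hs.2.1 ha
    · exact hs.2.2 ha
  · intro a _ b _ h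
    exact Subtype.ext h
  · intro s hs
    rw [Finset.mem_powersetCard] at hs
    refine ⟨⟨s, hs.2⟩, Finset.mem_filter.2 ⟨Finset.mem_univ _, fun h => ?_, fun h => ?_⟩, rfl⟩
    · simpa using hs.1 h
    · simpa using hs.1 h

lemma choose_odd (t : ℕ) : (((4 * t + 3 - 1).choose 2 : ℕ) : ZMod 2) = 1 := by
  have : (4 * t + 3 - 1).choose 2 = 2 * (4 * t * t + 3 * t) + 1 := by
    rw [Nat.choose_two_right]
    apply Nat.div_eq_of_eq_mul_left (by norm_num)
    have h1 : 4 * t + 3 - 1 = 4 * t + 2 := by omega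
    have h2 : 4 * t + 3 - 1 - 1 = 4 * t + 1 := by omega
    rw [h2, h1]; ring
  rw [this]; push_cast
  rw [show (2 : ZMod 2) = 0 by decide]; ring

lemma choose_even (t : ℕ) : (((4 * t + 3 - 2).choose 2 : ℕ) : ZMod 2) = 0 := by
  have : (4 * t + 3 - 2).choose 2 = 2 * (4 * t * t + t) := by
    rw [Nat.choose_two_right]
    apply Nat.div_eq_of_eq_mul_left (by norm_num)
    have h1 : 4 * t + 3 - 2 = 4 * t + 1 := by omega
    have h2 : 4 * t + 3 - 2 - 1 = 4 * t := by omega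
    rw [h2, h1]; ring
  rw [this]; push_cast
  rw [show (2 : ZMod 2) = 0 by decide]; ring

lemma thetaT_theta (t : ℕ) (v : Fin (4 * t + 3) → ZMod 2) :
    thetaT (4 * t + 3) (thetaMap (4 * t + 3) v) = v := by
  funext i
  rw [thetaT_apply]
  have h1 : ∀ s : Xk (4 * t + 3), (if i ∈ s.1 then 0 else thetaMap (4 * t + 3) v s) =
      ∑ j, if (¬ (i ∈ s.1) ∧ ¬ (j ∈ s.1)) then v j else 0 := by
    intro s
    rw [thetaMap_apply]
    by_cases hi : i ∈ s.1
    · simp [hi]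
    · simp only [hi, if_false, not_false_eq_true, true_and]
      exact Finset.sum_congr rfl fun j _ => by by_cases hj : j ∈ s.1 <;> simp [hj]
  rw [Finset.sum_congr rfl fun s _ => h1 s, Finset.sum_comm]
  have h2 : ∀ j, (∑ s : Xk (4 * t + 3), if (¬ (i ∈ s.1) ∧ ¬ (j ∈ s.1)) then v j else 0) =
      if j = i then v j else 0 := by
    intro j
    rw [← Finset.sum_filter, Finset.sum_const, card_avoid, nsmul_eq_mul]
    by_cases hij : j = i
    · subst hij
      rw [Finset.pair_eq_singleton, Finset.card_singleton, choose_odd]; simp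
    · rw [Finset.card_pair (Ne.symm hij), choose_even]; simp [hij]
  rw [Finset.sum_congr rfl fun j _ => h2 j]
  simp

lemma sum_thetaT (t : ℕ) (v : Xk (4 * t + 3) → ZMod 2) :
    ∑ i, thetaT (4 * t + 3) v i = ∑ s, v s := by
  simp only [thetaT_apply]
  rw [Finset.sum_comm]
  refine Finset.sum_congr rfl fun s _ => ?_
  rw [Finset.sum_congr rfl fun i _ => (ite_not (i ∈ s.1) (v s) 0).symm, ← Finset.sum_filter,
    Finset.sum_const]
  have h1 : (Finset.univ.filter fun i => ¬ i ∈ s.1) = s.1ᶜ := by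
    ext i; simp
  rw [h1, Finset.card_compl, Fintype.card_fin, s.2, nsmul_eq_mul]
  have h2 : ((4 * t + 3 - 2 : ℕ) : ZMod 2) = 1 := by
    rw [show 4 * t + 3 - 2 = 2 * (2 * t) + 1 by omega]
    push_cast
    rw [show (2 : ZMod 2) = 0 by decide]; ring
  rw [h2, one_mul]

lemma thetaT_eq (k : ℕ) (v : Xk k → ZMod 2) (i : Fin k) :
    thetaT k v i = ∑ s, allOnes k s * v s + ∑ s, xVec k i s * v s := by
  rw [thetaT_apply, ← Finset.sum_add_distrib]
  refine Finset.sum_congr rfl fun s _ => ?_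
  simp only [allOnes, xVec]
  split_ifs
  · rw [one_mul, zmod2_add_self]
  · simp

lemma mem_perp_iff {k : ℕ} (U : Submodule (ZMod 2) (Xk k → ZMod 2)) (v : Xk k → ZMod 2) :
    v ∈ perpSub (ZMod 2) U ↔ ∀ w ∈ U, ∑ s, w s * v s = 0 := by
  rw [perpSub, Submodule.mem_iInf]
  simp only [LinearMap.mem_ker, formMap, LinearMap.sum_apply,
      LinearMap.smul_apply, LinearMap.proj_apply, smul_eq_mul, Subtype.forall]

lemma mem_perp_iff_thetaT (t : ℕ) (v : Xk (4 * t + 3) → ZMod 2) :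
    v ∈ perpSub (ZMod 2) (P1 (4 * t + 3) ⊔ P2 (4 * t + 3)) ↔ thetaT (4 * t + 3) v = 0 := by
  rw [mem_perp_iff]
  constructor
  · intro h
    funext i
    rw [thetaT_eq, h _ (Submodule.mem_sup_left (Submodule.subset_span rfl)),
      h _ (Submodule.mem_sup_right (Submodule.subset_span ⟨i, rfl⟩))]
    simp
  · intro h
    have h1 : ∑ s, allOnes (4 * t + 3) s * v s = 0 := by
      have := sum_thetaT t v
      rw [h] at this
      simp only [allOnes, one_mul]
      rw [← this]; simp
    have h2 : ∀ i, ∑ s, xVec (4 * t + 3) i s * v s = 0 := by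
      intro i
      have := thetaT_eq (4 * t + 3) v i
      rw [h, h1, zero_add] at this
      exact this.symm
    let U : Submodule (ZMod 2) (Xk (4 * t + 3) → ZMod 2) :=
      { carrier := {w | ∑ s, w s * v s = 0}
        zero_mem' := by simp
        add_mem' := by
          intro a b ha hb
          simp only [Set.mem_ofPred_eq, Pi.add_apply, add_mul, Finset.sum_add_distrib] at *
          rw [ha, hb, add_zero]
        smul_mem' := by
          intro c a ha
          simp only [Set.mem_ofPred_eq, Pi.smul_apply, smul_eq_mul, mul_assoc,
            ← Finset.mul_sum] at *
          rw [ha, mul_zero] }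
    have hU : P1 (4 * t + 3) ⊔ P2 (4 * t + 3) ≤ U := by
      refine sup_le (Submodule.span_le.2 ?_) (Submodule.span_le.2 ?_)
      · rintro _ rfl; exact h1
      · rintro _ ⟨i, rfl⟩; exact h2 i
    exact fun w hw => hU hw

/-- The dimension count. -/
lemma finrank_P3 (t : ℕ) {n : ℕ} (hn : 0 < n)
    (hdim : Module.finrank (ZMod 2) (groupCohomology (Rep.of
      (permRep (ZMod 2) (alternatingGroup (Fin (4 * t + 3))) (Xk (4 * t + 3)))) 2) = n) :
    n = Module.finrank (ZMod 2) (groupCohomology (Rep.of (P3Rep (4 * t + 3))) 2) +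
      Module.finrank (ZMod 2) (groupCohomology (Rep.of
      (permRep (ZMod 2) (alternatingGroup (Fin (4 * t + 3))) (Fin (4 * t + 3)))) 2) := by
  let f : (P3Rep (4 * t + 3)).IntertwiningMap
      (permRep (ZMod 2) (alternatingGroup (Fin (4 * t + 3))) (Xk (4 * t + 3))) :=
    { toLinearMap := Submodule.subtype _
      isIntertwining' := fun g => LinearMap.ext fun v => rfl }
  have hr : ∀ v, v + thetaMap (4 * t + 3) (thetaT (4 * t + 3) v) ∈
      perpSub (ZMod 2) (P1 (4 * t + 3) ⊔ P2 (4 * t + 3)) := by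
    intro v
    rw [mem_perp_iff_thetaT, map_add, thetaT_theta]
    funext i
    exact zmod2_add_self _
  let rl : (Xk (4 * t + 3) → ZMod 2) →ₗ[ZMod 2]
      perpSub (ZMod 2) (P1 (4 * t + 3) ⊔ P2 (4 * t + 3)) :=
    LinearMap.codRestrict _ (LinearMap.id + thetaMap (4 * t + 3) ∘ₗ thetaT (4 * t + 3)) hr
  let r : (permRep (ZMod 2) (alternatingGroup (Fin (4 * t + 3))) (Xk (4 * t + 3))).IntertwiningMap
      (P3Rep (4 * t + 3)) :=
    { toLinearMap := rl
      isIntertwining' := fun g => LinearMap.ext fun v => Subtype.ext (by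
        have h1 := LinearMap.congr_fun ((thetaTI (4 * t + 3)).isIntertwining' g) v
        have h2 := LinearMap.congr_fun ((thetaI (4 * t + 3)).isIntertwining' g)
          (thetaT (4 * t + 3) v)
        have h3 := (congrArg (thetaMap (4 * t + 3)) h1).trans h2
        exact (congrArg (fun z => permRep (ZMod 2) (alternatingGroup (Fin (4 * t + 3)))
          (Xk (4 * t + 3)) g v + z) h3).trans
          (map_add (permRep (ZMod 2) (alternatingGroup (Fin (4 * t + 3)))
            (Xk (4 * t + 3)) g) v (thetaMap (4 * t + 3) (thetaT (4 * t + 3) v))).symm) }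
  refine finrank_H2_split f r (thetaTI _) (thetaI _) ?_ ?_ ?_ ?_ ?_ hn hdim
  · intro u
    have hu := (mem_perp_iff_thetaT t u.1).1 u.2
    refine Subtype.ext ?_
    show u.1 + thetaMap (4 * t + 3) (thetaT (4 * t + 3) u.1) = u.1
    rw [hu, map_zero, add_zero]
  · intro w; exact thetaT_theta t w
  · intro u; exact (mem_perp_iff_thetaT t u.1).1 u.2
  · intro w
    refine Subtype.ext ?_
    show thetaMap (4 * t + 3) w + thetaMap (4 * t + 3) (thetaT (4 * t + 3)
      (thetaMap (4 * t + 3) w)) = 0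
    rw [thetaT_theta]
    funext i
    exact zmod2_add_self _
  · intro v
    show v + thetaMap (4 * t + 3) (thetaT (4 * t + 3) v) +
      thetaMap (4 * t + 3) (thetaT (4 * t + 3) v) = v
    rw [add_assoc]
    funext s
    show v s + (_ + _) = v s
    rw [zmod2_add_self, add_zero]
/-! ## Part D: the stabilizers of a point and of a pair in the alternating group -/

/-- The sign correction on the last three points. -/
def epsHom : ℤˣ →* Equiv.Perm (Fin 3) where
  toFun u := if u = 1 then 1 else Equiv.swap 0 1
  map_one' := by simp
  map_mul' := by decide

lemma epsHom_sign : ∀ u, Equiv.Perm.sign (epsHom u) = u := by decide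

lemma epsHom_two : ∀ u, epsHom u 2 = 2 := by decide

lemma epsHom_pair : ∀ u, (epsHom u 0 = 0 ∧ epsHom u 1 = 1) ∨ (epsHom u 0 = 1 ∧ epsHom u 1 = 0) := by
  decide

/-- `S_m` embedded in the even permutations of `m + 3` points. -/
def symEmb (m : ℕ) : Equiv.Perm (Fin m) →* Equiv.Perm (Fin (m + 3)) :=
  (finSumFinEquiv.permCongrHom.toMonoidHom.comp (Equiv.Perm.sumCongrHom (Fin m) (Fin 3))).comp
    ((MonoidHom.id _).prod (epsHom.comp Equiv.Perm.sign))

lemma symEmb_eq (m : ℕ) (σ : Equiv.Perm (Fin m)) :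
    symEmb m σ = finSumFinEquiv.permCongr
      (Equiv.Perm.sumCongr σ (epsHom (Equiv.Perm.sign σ))) := rfl

lemma symEmb_sign (m : ℕ) (σ : Equiv.Perm (Fin m)) : Equiv.Perm.sign (symEmb m σ) = 1 := by
  rw [symEmb_eq, Equiv.Perm.sign_permCongr, Equiv.Perm.sign_sumCongr, epsHom_sign,
    Int.units_mul_self]

lemma symEmb_left (m : ℕ) (σ : Equiv.Perm (Fin m)) (i : Fin m) :
    symEmb m σ (Fin.castAdd 3 i) = Fin.castAdd 3 (σ i) := by
  rw [symEmb_eq, Equiv.permCongr_apply]; simp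

lemma symEmb_right (m : ℕ) (σ : Equiv.Perm (Fin m)) (i : Fin 3) :
    symEmb m σ (Fin.natAdd m i) = Fin.natAdd m (epsHom (Equiv.Perm.sign σ) i) := by
  rw [symEmb_eq, Equiv.permCongr_apply]; simp

lemma symEmb_swap (m : ℕ) {a b : Fin m} (hab : a ≠ b) :
    symEmb m (Equiv.swap a b) = Equiv.swap (Fin.castAdd 3 a) (Fin.castAdd 3 b) *
      Equiv.swap (Fin.natAdd m 0) (Fin.natAdd m 1) := by
  rw [symEmb_eq, Equiv.Perm.sign_swap hab]
  have h1 : epsHom (-1) = Equiv.swap 0 1 := by decide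
  have h2 : Equiv.Perm.sumCongr (Equiv.swap a b) (Equiv.swap (0 : Fin 3) 1) =
      Equiv.swap (Sum.inl a) (Sum.inl b) * Equiv.swap (Sum.inr 0) (Sum.inr 1) := by
    rw [← Equiv.Perm.sumCongr_swap_one, ← Equiv.Perm.sumCongr_one_swap,
      Equiv.Perm.sumCongr_mul, mul_one, one_mul]
  rw [h1, h2, ← Equiv.permCongrHom_coe, map_mul]
  congr 1
  · exact (Equiv.symm_trans_swap_trans _ _ _).trans (by simp)
  · exact (Equiv.symm_trans_swap_trans _ _ _).trans (by simp)

lemma symEmb_swap_swap (m : ℕ) {a b c d : Fin m} (hab : a ≠ b) (hcd : c ≠ d) :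
    symEmb m (Equiv.swap a b * Equiv.swap c d) =
      Equiv.swap (Fin.castAdd 3 a) (Fin.castAdd 3 b) *
      Equiv.swap (Fin.castAdd 3 c) (Fin.castAdd 3 d) := by
  have hne : ∀ (i : Fin m) (j : Fin 3), Fin.castAdd 3 i ≠ Fin.natAdd m j := by
    intro i j h
    have := congrArg Fin.val h
    simp at this
    omega
  rw [map_mul, symEmb_swap m hab, symEmb_swap m hcd]
  have hc : Equiv.swap (Fin.natAdd m (0 : Fin 3)) (Fin.natAdd m 1) *
      Equiv.swap (Fin.castAdd 3 c) (Fin.castAdd 3 d) =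
      Equiv.swap (Fin.castAdd 3 c) (Fin.castAdd 3 d) *
      Equiv.swap (Fin.natAdd m (0 : Fin 3)) (Fin.natAdd m 1) := by
    rw [Equiv.mul_swap_eq_swap_mul, Equiv.swap_apply_of_ne_of_ne (hne _ _) (hne _ _),
      Equiv.swap_apply_of_ne_of_ne (hne _ _) (hne _ _)]
  rw [mul_assoc, ← mul_assoc (Equiv.swap (Fin.natAdd m (0 : Fin 3)) _), hc, mul_assoc,
    Equiv.swap_mul_self, mul_one]

lemma symEmb_injective (m : ℕ) : Function.Injective (symEmb m) := by
  intro σ τ h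
  ext i
  have h1 := congrArg (fun p : Equiv.Perm (Fin (m + 3)) => p (Fin.castAdd 3 i)) h
  simp only [symEmb_left] at h1
  exact congrArg Fin.val (Fin.castAdd_injective m 3 h1)

/-- `symEmb` landing in the alternating group. -/
def symAlt (m : ℕ) : Equiv.Perm (Fin m) →* alternatingGroup (Fin (m + 3)) :=
  (symEmb m).codRestrict _ fun σ => Equiv.Perm.mem_alternatingGroup.2 (symEmb_sign m σ)

/-- The base pair. -/
def basePair (m : ℕ) : Xk (m + 3) :=
  ⟨{Fin.natAdd m 0, Fin.natAdd m 1}, Finset.card_pair (by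
    intro h
    have := congrArg Fin.val h
    simp at this)⟩

lemma smul_basePair {m : ℕ} (g : alternatingGroup (Fin (m + 3))) :
    (g • basePair m).1 = {g.1 (Fin.natAdd m 0), g.1 (Fin.natAdd m 1)} := by
  show g.1 • ({Fin.natAdd m 0, Fin.natAdd m 1} : Finset (Fin (m + 3))) = _
  rw [Finset.smul_finset_insert, Finset.smul_finset_singleton]
  rfl

/-- `S_m` in the point stabilizer. -/
def symPt (m : ℕ) : Equiv.Perm (Fin m) →*
    MulAction.stabilizer (alternatingGroup (Fin (m + 3))) (Fin.natAdd m (2 : Fin 3)) :=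
  (symAlt m).codRestrict _ fun σ => by
    show symEmb m σ (Fin.natAdd m 2) = Fin.natAdd m 2
    rw [symEmb_right, epsHom_two]

/-- `S_m` in the pair stabilizer. -/
def symPair (m : ℕ) : Equiv.Perm (Fin m) →*
    MulAction.stabilizer (alternatingGroup (Fin (m + 3))) (basePair m) :=
  (symAlt m).codRestrict _ fun σ => by
    refine Subtype.ext ?_
    rw [smul_basePair]
    show {symEmb m σ (Fin.natAdd m 0), symEmb m σ (Fin.natAdd m 1)} = _
    rw [symEmb_right, symEmb_right]
    rcases epsHom_pair (Equiv.Perm.sign σ) with h | h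
    · rw [h.1, h.2]; rfl
    · rw [h.1, h.2, Finset.pair_comm]; rfl

lemma symPt_coe (m : ℕ) (σ : Equiv.Perm (Fin m)) : ((symPt m σ).1).1 = symEmb m σ := rfl
lemma symPair_coe (m : ℕ) (σ : Equiv.Perm (Fin m)) : ((symPair m σ).1).1 = symEmb m σ := rfl

lemma symPt_injective (m : ℕ) : Function.Injective (symPt m) := fun _ _ h =>
  symEmb_injective m (congrArg (fun p => (p.1).1) h)
lemma symPair_injective (m : ℕ) : Function.Injective (symPair m) := fun _ _ h =>
  symEmb_injective m (congrArg (fun p => (p.1).1) h)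

lemma alt_two_pretransitive (m : ℕ) (hm : 1 ≤ m) :
    MulAction.IsMultiplyPretransitive (alternatingGroup (Fin (m + 3))) (Fin (m + 3)) 2 := by
  have := alternatingGroup.isMultiplyPretransitive (Fin (m + 3))
  refine MulAction.isMultiplyPretransitive_of_le (n := Nat.card (Fin (m + 3)) - 2) ?_
    (Nat.sub_le _ _)
  rw [Nat.card_fin]; omega

lemma alt_pretransitive_pt (m : ℕ) :
    MulAction.IsPretransitive (alternatingGroup (Fin (m + 3))) (Fin (m + 3)) :=
  alternatingGroup.isPretransitive_of_three_le_card (Fin (m + 3)) (by rw [Nat.card_fin]; omega)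

lemma alt_pretransitive_pair (m : ℕ) (hm : 1 ≤ m) :
    MulAction.IsPretransitive (alternatingGroup (Fin (m + 3))) (Xk (m + 3)) := by
  refine ⟨fun s t => ?_⟩
  obtain ⟨a, b, hab, hs⟩ := Finset.card_eq_two.1 s.2
  obtain ⟨c, d, hcd, ht⟩ := Finset.card_eq_two.1 t.2
  obtain ⟨g, h1, h2⟩ := MulAction.is_two_pretransitive_iff.1 (alt_two_pretransitive m hm) hab hcd
  refine ⟨g, Subtype.ext ?_⟩
  show g.1 • s.1 = t.1
  rw [hs, ht, Finset.smul_finset_insert, Finset.smul_finset_singleton]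
  exact congrArg₂ (fun x y => ({x, y} : Finset (Fin (m + 3)))) h1 h2

lemma index_aux (m : ℕ) {X : Type} [MulAction (alternatingGroup (Fin (m + 3))) X]
    [MulAction.IsPretransitive (alternatingGroup (Fin (m + 3))) X] (x0 : X)
    (J : Equiv.Perm (Fin m) →* MulAction.stabilizer (alternatingGroup (Fin (m + 3))) x0)
    (hJ : Function.Injective J) :
    2 * Nat.card X * J.range.index = (m + 3) * (m + 2) * (m + 1) := by
  have h1 := MulAction.index_stabilizer_of_transitive (alternatingGroup (Fin (m + 3))) x0
  have h2 := (MulAction.stabilizer (alternatingGroup (Fin (m + 3))) x0).index_mul_card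
  have h3 := J.range.index_mul_card
  have h4 : Nat.card J.range = m.factorial := by
    rw [← Nat.card_congr (MonoidHom.ofInjective hJ).toEquiv, Nat.card_perm, Nat.card_fin]
  have h5 := two_mul_nat_card_alternatingGroup (α := Fin (m + 3))
  rw [Nat.card_perm, Nat.card_fin] at h5
  rw [h1, ← h3, h4] at h2
  rw [← h2] at h5
  have h6 : (m + 3).factorial = (m + 3) * (m + 2) * (m + 1) * m.factorial := by
    rw [Nat.factorial_succ, Nat.factorial_succ, Nat.factorial_succ]; ring
  rw [h6] at h5
  have hpos := Nat.factorial_pos m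
  apply Nat.eq_of_mul_eq_mul_right hpos
  rw [← h5]; ring

lemma index_symPt (t : ℕ) : Odd (symPt (4 * t)).range.index := by
  have := alt_pretransitive_pt (4 * t)
  have h := index_aux (4 * t) _ (symPt (4 * t)) (symPt_injective _)
  rw [Nat.card_fin] at h
  have h1 : (symPt (4 * t)).range.index = 2 * (4 * t * t + 3 * t) + 1 := by
    apply Nat.eq_of_mul_eq_mul_left (show 0 < 2 * (4 * t + 3) by omega)
    rw [h]; ring
  rw [h1]
  exact odd_two_mul_add_one _

lemma card_Xk (n : ℕ) : Nat.card (Xk n) = n.choose 2 := by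
  have h : Fintype.card (Xk n) = n.choose 2 := by
    have := Fintype.card_finset_len (α := Fin n) 2
    rw [Fintype.card_fin] at this
    exact this
  rw [Nat.card_eq_fintype_card, h]

lemma index_symPair (t : ℕ) (ht : 1 ≤ t) : Odd (symPair (4 * t)).range.index := by
  have := alt_pretransitive_pair (4 * t) (by omega)
  have h := index_aux (4 * t) _ (symPair (4 * t)) (symPair_injective _)
  rw [card_Xk] at h
  have h0 : 2 * (4 * t + 3).choose 2 = (4 * t + 3) * (4 * t + 2) := by
    rw [Nat.choose_two_right, Nat.mul_div_cancel' (Nat.even_mul_pred_self _).two_dvd]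
    rfl
  rw [h0] at h
  have h1 : (symPair (4 * t)).range.index = 2 * (2 * t) + 1 := by
    apply Nat.eq_of_mul_eq_mul_left (show 0 < (4 * t + 3) * (4 * t + 2) by positivity)
    rw [h]; ring
  rw [h1]
  exact odd_two_mul_add_one _

/-- The squaring functional. -/
def sqFun {S : Type} [Group S] (g : S) : (S → S → ZMod 2) →ₗ[ZMod 2] ZMod 2 where
  toFun f := f g g + f 1 1
  map_add' a b := by simp only [Pi.add_apply]; ring
  map_smul' c a := by simp only [Pi.smul_apply, smul_eq_mul, RingHom.id_apply]; ring

lemma sqFun_eq_zero {S : Type} [Group S] (g : S) (f : S → S → ZMod 2) :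
    sqFun g f = 0 ↔ f g g = f 1 1 := by
  show f g g + f 1 1 = 0 ↔ _
  exact CharTwo.add_eq_zero

lemma castAdd_ne_natAdd {m : ℕ} (i : Fin m) (j : Fin 3) : Fin.castAdd 3 i ≠ Fin.natAdd m j := by
  intro h
  have := congrArg Fin.val h
  simp at this
  omega

lemma castAdd_ne {m : ℕ} {i j : Fin m} (h : i ≠ j) : Fin.castAdd 3 i ≠ Fin.castAdd 3 j :=
  fun e => h (Fin.castAdd_injective m 3 e)

lemma natAdd_ne {m : ℕ} {i j : Fin 3} (h : i ≠ j) : Fin.natAdd m i ≠ Fin.natAdd m j :=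
  fun e => h (by
    have := congrArg Fin.val e
    simp at this
    exact Fin.ext this)

lemma conj_in_pt {m : ℕ} {a b c d : Fin m} (hab : a ≠ b) (hac : a ≠ c) (had : a ≠ d)
    (hbc : b ≠ c) (hbd : b ≠ d) (hcd : c ≠ d) :
    IsConj (symPt m (Equiv.swap a b * Equiv.swap c d)) (symPt m (Equiv.swap a b)) := by
  let h0 : Equiv.Perm (Fin (m + 3)) := Equiv.swap (Fin.castAdd 3 c) (Fin.natAdd m 0) *
    Equiv.swap (Fin.castAdd 3 d) (Fin.natAdd m 1)
  have hsign : Equiv.Perm.sign h0 = 1 := by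
    rw [map_mul, Equiv.Perm.sign_swap (castAdd_ne_natAdd _ _),
      Equiv.Perm.sign_swap (castAdd_ne_natAdd _ _)]
    rfl
  have h01 : (0 : Fin 3) ≠ 1 := by decide
  have h20 : (2 : Fin 3) ≠ 0 := by decide
  have h21 : (2 : Fin 3) ≠ 1 := by decide
  have hz : h0 (Fin.natAdd m 2) = Fin.natAdd m 2 := by
    rw [Equiv.Perm.mul_apply,
      Equiv.swap_apply_of_ne_of_ne (castAdd_ne_natAdd _ _).symm (natAdd_ne h21),
      Equiv.swap_apply_of_ne_of_ne (castAdd_ne_natAdd _ _).symm (natAdd_ne h20)]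
  have ha : h0 (Fin.castAdd 3 a) = Fin.castAdd 3 a := by
    rw [Equiv.Perm.mul_apply,
      Equiv.swap_apply_of_ne_of_ne (castAdd_ne had) (castAdd_ne_natAdd _ _),
      Equiv.swap_apply_of_ne_of_ne (castAdd_ne hac) (castAdd_ne_natAdd _ _)]
  have hb : h0 (Fin.castAdd 3 b) = Fin.castAdd 3 b := by
    rw [Equiv.Perm.mul_apply,
      Equiv.swap_apply_of_ne_of_ne (castAdd_ne hbd) (castAdd_ne_natAdd _ _),
      Equiv.swap_apply_of_ne_of_ne (castAdd_ne hbc) (castAdd_ne_natAdd _ _)]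
  have hc : h0 (Fin.castAdd 3 c) = Fin.natAdd m 0 := by
    rw [Equiv.Perm.mul_apply,
      Equiv.swap_apply_of_ne_of_ne (castAdd_ne hcd) (castAdd_ne_natAdd _ _),
      Equiv.swap_apply_left]
  have hd : h0 (Fin.castAdd 3 d) = Fin.natAdd m 1 := by
    rw [Equiv.Perm.mul_apply, Equiv.swap_apply_left,
      Equiv.swap_apply_of_ne_of_ne (castAdd_ne_natAdd _ _).symm (natAdd_ne h01.symm)]
  let h1 : alternatingGroup (Fin (m + 3)) := ⟨h0, Equiv.Perm.mem_alternatingGroup.2 hsign⟩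
  let h2 : MulAction.stabilizer (alternatingGroup (Fin (m + 3))) (Fin.natAdd m (2 : Fin 3)) :=
    ⟨h1, hz⟩
  refine isConj_iff.2 ⟨h2, ?_⟩
  rw [mul_inv_eq_iff_eq_mul]
  refine Subtype.ext (Subtype.ext ?_)
  show h0 * symEmb m (Equiv.swap a b * Equiv.swap c d) = symEmb m (Equiv.swap a b) * h0
  clear_value h0
  have e1 := Equiv.mul_swap_eq_swap_mul h0 (Fin.castAdd 3 a) (Fin.castAdd 3 b)
  have e2 := Equiv.mul_swap_eq_swap_mul h0 (Fin.castAdd 3 c) (Fin.castAdd 3 d)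
  rw [ha, hb] at e1
  rw [hc, hd] at e2
  rw [symEmb_swap_swap m hab hcd, symEmb_swap m hab, ← mul_assoc, e1, mul_assoc, e2, mul_assoc]

lemma H2_pt (t : ℕ) (ht : 1 ≤ t) :
    Module.finrank (ZMod 2) (groupCohomology (Rep.trivial (ZMod 2) (MulAction.stabilizer
      (alternatingGroup (Fin (4 * t + 3))) (Fin.natAdd (4 * t) (2 : Fin 3))) (ZMod 2)) 2) = 1 := by
  let a : Fin (4 * t) := ⟨0, by omega⟩
  let b : Fin (4 * t) := ⟨1, by omega⟩
  let c : Fin (4 * t) := ⟨2, by omega⟩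
  let d : Fin (4 * t) := ⟨3, by omega⟩
  have hab : a ≠ b := by simp [a, b]
  have hac : a ≠ c := by simp [a, c]
  have had : a ≠ d := by simp [a, d]
  have hbc : b ≠ c := by simp [b, c]
  have hbd : b ≠ d := by simp [b, d]
  have hcd : c ≠ d := by simp [c, d]
  set g := symPt (4 * t) (Equiv.swap a b * Equiv.swap c d) with hg
  have hgg : g * g = 1 := by rw [hg, ← map_mul, swap_mul_swap_sq hac had hbc hbd, map_one]
  refine finrank_H2_trivial (LinearMap.pi fun _ => sqFun g) ?_ ?_
  · intro f hf
    constructor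
    · intro h
      funext _
      exact (sqFun_eq_zero g f).2 (h.sq g hgg)
    · intro h
      have h1 := (sqFun_eq_zero g f).1 (congrFun h 0)
      refine isB_of_sym hf (symPt (4 * t)) (symPt_injective _) (index_symPt t) hab hac had hbc
        hbd hcd ?_ h1
      rw [hf.sq_of_isConj hgg (conj_in_pt hab hac had hbc hbd hcd)]
      exact h1
  · intro v
    obtain ⟨e, he, hes⟩ := exists_spin (4 * t + 3)
    refine ⟨fun x y => v 0 * e x.1.1 y.1.1, ?_, ?_⟩
    · intro x y z
      have := he x.1.1 y.1.1 z.1.1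
      show v 0 * e (x.1.1 * y.1.1) z.1.1 + v 0 * e x.1.1 y.1.1 =
        v 0 * e y.1.1 z.1.1 + v 0 * e x.1.1 (y.1.1 * z.1.1)
      rw [← mul_add, ← mul_add, this]
    · funext i
      rw [Subsingleton.elim i 0]
      show v 0 * e (symEmb (4 * t) _) (symEmb (4 * t) _) + v 0 * e 1 1 = v 0
      rw [symEmb_swap_swap _ hab hcd, hes _ _ _ _ (castAdd_ne hab) (castAdd_ne hac)
        (castAdd_ne had) (castAdd_ne hbc) (castAdd_ne hbd) (castAdd_ne hcd), mul_add, mul_one,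
        add_right_comm, zmod2_add_self, zero_add]

/-- The character of the pair stabilizer recording the action on the pair. -/
def pairChar {m : ℕ} (g : MulAction.stabilizer (alternatingGroup (Fin (m + 3))) (basePair m)) :
    ZMod 2 := if g.1.1 (Fin.natAdd m 0) = Fin.natAdd m 0 then 0 else 1

lemma pair_cases {m : ℕ}
    (g : MulAction.stabilizer (alternatingGroup (Fin (m + 3))) (basePair m)) :
    (g.1.1 (Fin.natAdd m 0) = Fin.natAdd m 0 ∧ g.1.1 (Fin.natAdd m 1) = Fin.natAdd m 1) ∨
    (g.1.1 (Fin.natAdd m 0) = Fin.natAdd m 1 ∧ g.1.1 (Fin.natAdd m 1) = Fin.natAdd m 0) := by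
  have h : (g.1 • basePair m : Xk (m + 3)).1 = (basePair m).1 :=
    congrArg (fun s : Xk (m + 3) => s.1) (MulAction.mem_stabilizer_iff.1 g.2)
  rw [smul_basePair] at h
  change _ = ({Fin.natAdd m 0, Fin.natAdd m 1} : Finset (Fin (m + 3))) at h
  have h01 : (Fin.natAdd m 0 : Fin (m + 3)) ≠ Fin.natAdd m 1 := natAdd_ne (by decide)
  have hne : g.1.1 (Fin.natAdd m 0) ≠ g.1.1 (Fin.natAdd m 1) := fun e =>
    h01 (g.1.1.injective e)
  have hx : g.1.1 (Fin.natAdd m 0) ∈ ({Fin.natAdd m 0, Fin.natAdd m 1} : Finset (Fin (m + 3))) := by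
    rw [← h]; simp
  have hy : g.1.1 (Fin.natAdd m 1) ∈ ({Fin.natAdd m 0, Fin.natAdd m 1} : Finset (Fin (m + 3))) := by
    rw [← h]; simp
  rw [Finset.mem_insert, Finset.mem_singleton] at hx hy
  rcases hx with hx | hx <;> rcases hy with hy | hy
  · exact absurd (hx.trans hy.symm) hne
  · exact Or.inl ⟨hx, hy⟩
  · exact Or.inr ⟨hx, hy⟩
  · exact absurd (hx.trans hy.symm) hne

lemma pairChar_mul {m : ℕ}
    (g h : MulAction.stabilizer (alternatingGroup (Fin (m + 3))) (basePair m)) :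
    pairChar (g * h) = pairChar g + pairChar h := by
  have h01 : (Fin.natAdd m 0 : Fin (m + 3)) ≠ Fin.natAdd m 1 := natAdd_ne (by decide)
  have hmul : (g * h).1.1 (Fin.natAdd m 0) = g.1.1 (h.1.1 (Fin.natAdd m 0)) := rfl
  unfold pairChar
  rw [hmul]
  rcases pair_cases g with hg | hg <;> rcases pair_cases h with hh | hh <;>
    rw [hh.1] <;> simp only [hg.1, hg.2, h01.symm, if_true, if_false] <;> decide

lemma H2_pair (t : ℕ) (ht : 1 ≤ t) :
    Module.finrank (ZMod 2) (groupCohomology (Rep.trivial (ZMod 2) (MulAction.stabilizer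
      (alternatingGroup (Fin (4 * t + 3))) (basePair (4 * t))) (ZMod 2)) 2) = 2 := by
  let a : Fin (4 * t) := ⟨0, by omega⟩
  let b : Fin (4 * t) := ⟨1, by omega⟩
  let c : Fin (4 * t) := ⟨2, by omega⟩
  let d : Fin (4 * t) := ⟨3, by omega⟩
  have hab : a ≠ b := by simp [a, b]
  have hac : a ≠ c := by simp [a, c]
  have had : a ≠ d := by simp [a, d]
  have hbc : b ≠ c := by simp [b, c]
  have hbd : b ≠ d := by simp [b, d]
  have hcd : c ≠ d := by simp [c, d]
  have h01 : (Fin.natAdd (4 * t) 0 : Fin (4 * t + 3)) ≠ Fin.natAdd (4 * t) 1 :=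
    natAdd_ne (by decide)
  set g1 := symPair (4 * t) (Equiv.swap a b) with hg1
  set g2 := symPair (4 * t) (Equiv.swap a b * Equiv.swap c d) with hg2
  have hgg1 : g1 * g1 = 1 := by rw [hg1, ← map_mul, Equiv.swap_mul_self, map_one]
  have hgg2 : g2 * g2 = 1 := by rw [hg2, ← map_mul, swap_mul_swap_sq hac had hbc hbd, map_one]
  have hw1 : pairChar g1 = 1 := by
    have : g1.1.1 (Fin.natAdd (4 * t) 0) = Fin.natAdd (4 * t) 1 := by
      show symEmb (4 * t) (Equiv.swap a b) _ = _
      rw [symEmb_swap _ hab, Equiv.Perm.mul_apply, Equiv.swap_apply_left,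
        Equiv.swap_apply_of_ne_of_ne (castAdd_ne_natAdd _ _).symm (castAdd_ne_natAdd _ _).symm]
    unfold pairChar
    rw [this, if_neg h01.symm]
  have hw2 : pairChar g2 = 0 := by
    have : g2 = symPair (4 * t) (Equiv.swap a b) * symPair (4 * t) (Equiv.swap c d) :=
      map_mul _ _ _
    have hw3 : pairChar (symPair (4 * t) (Equiv.swap c d)) = 1 := by
      have : (symPair (4 * t) (Equiv.swap c d)).1.1 (Fin.natAdd (4 * t) 0) =
          Fin.natAdd (4 * t) 1 := by
        show symEmb (4 * t) (Equiv.swap c d) _ = _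
        rw [symEmb_swap _ hcd, Equiv.Perm.mul_apply, Equiv.swap_apply_left,
          Equiv.swap_apply_of_ne_of_ne (castAdd_ne_natAdd _ _).symm (castAdd_ne_natAdd _ _).symm]
      unfold pairChar
      rw [this, if_neg h01.symm]
    rw [this, pairChar_mul, hw3, ← hg1, hw1]
    decide
  have hw0 : pairChar (1 : MulAction.stabilizer
      (alternatingGroup (Fin (4 * t + 3))) (basePair (4 * t))) = 0 := if_pos rfl
  refine finrank_H2_trivial (LinearMap.pi ![sqFun g1, sqFun g2]) ?_ ?_
  · intro f hf
    constructor
    · intro h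
      funext i
      fin_cases i
      · exact (sqFun_eq_zero g1 f).2 (h.sq g1 hgg1)
      · exact (sqFun_eq_zero g2 f).2 (h.sq g2 hgg2)
    · intro h
      exact isB_of_sym hf (symPair (4 * t)) (symPair_injective _) (index_symPair t ht) hab hac had
        hbc hbd hcd ((sqFun_eq_zero g1 f).1 (congrFun h 0)) ((sqFun_eq_zero g2 f).1 (congrFun h 1))
  · intro v
    obtain ⟨e, he, hes⟩ := exists_spin (4 * t + 3)
    refine ⟨fun x y => v 1 * e x.1.1 y.1.1 + (v 0 + v 1) * (pairChar x * pairChar y), ?_, ?_⟩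
    · intro x y z
      have := he x.1.1 y.1.1 z.1.1
      show (v 1 * e (x.1.1 * y.1.1) z.1.1 + (v 0 + v 1) * (pairChar (x * y) * pairChar z)) +
        (v 1 * e x.1.1 y.1.1 + (v 0 + v 1) * (pairChar x * pairChar y)) =
        (v 1 * e y.1.1 z.1.1 + (v 0 + v 1) * (pairChar y * pairChar z)) +
        (v 1 * e x.1.1 (y.1.1 * z.1.1) + (v 0 + v 1) * (pairChar x * pairChar (y * z)))
      rw [pairChar_mul, pairChar_mul]
      linear_combination v 1 * this
    · have hs1 : e g1.1.1 g1.1.1 = e 1 1 + 1 := by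
        show e (symEmb (4 * t) (Equiv.swap a b)) (symEmb (4 * t) (Equiv.swap a b)) = _
        rw [symEmb_swap _ hab, hes _ _ _ _ (castAdd_ne hab) (castAdd_ne_natAdd _ _)
          (castAdd_ne_natAdd _ _) (castAdd_ne_natAdd _ _) (castAdd_ne_natAdd _ _) h01]
      have hs2 : e g2.1.1 g2.1.1 = e 1 1 + 1 := by
        show e (symEmb (4 * t) _) (symEmb (4 * t) _) = _
        rw [symEmb_swap_swap _ hab hcd, hes _ _ _ _ (castAdd_ne hab) (castAdd_ne hac)
          (castAdd_ne had) (castAdd_ne hbc) (castAdd_ne hbd) (castAdd_ne hcd)]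
      have h2 : (2 : ZMod 2) = 0 := by decide
      funext i
      fin_cases i
      · show (v 1 * e g1.1.1 g1.1.1 + (v 0 + v 1) * (pairChar g1 * pairChar g1)) +
          (v 1 * e 1 1 + (v 0 + v 1) * (pairChar 1 * pairChar 1)) = v 0
        rw [hs1, hw1, hw0]
        linear_combination (v 1 * e 1 1 + v 1) * h2
      · show (v 1 * e g2.1.1 g2.1.1 + (v 0 + v 1) * (pairChar g2 * pairChar g2)) +
          (v 1 * e 1 1 + (v 0 + v 1) * (pairChar 1 * pairChar 1)) = v 1
        rw [hs2, hw2, hw0]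
        linear_combination (v 1 * e 1 1) * h2

/-- **(Guralnick–Liebeck, Section 4.)** Let `k ≡ 3 (mod 4)`, `k ≥ 7`, and let
`P₃ ≅ S^(k-2,2) (mod 2)` be the irreducible summand `(P₁ + P₂)^⊥` of the `𝔽₂ A_k`
permutation module on 2-subsets. Then `dim H²(A_k, P₃) = 1` over `𝔽₂`. -/
theorem dim_H2_P3_eq_one (k : ℕ) (hk : 7 ≤ k) (hmod : k % 4 = 3) :
    Module.finrank (ZMod 2) (groupCohomology (Rep.of (P3Rep k)) 2) = 1 := by
  obtain ⟨t, ht, rfl⟩ : ∃ t, 1 ≤ t ∧ k = 4 * t + 3 := ⟨k / 4, by omega, by omega⟩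
  have i1 := alt_pretransitive_pt (4 * t)
  have i2 := alt_pretransitive_pair (4 * t) (by omega)
  have h1 := (finrank_H2_permRep (K := alternatingGroup (Fin (4 * t + 3)))
    (Fin.natAdd (4 * t) (2 : Fin 3))).trans (H2_pt t ht)
  have h2 := (finrank_H2_permRep (K := alternatingGroup (Fin (4 * t + 3)))
    (basePair (4 * t))).trans (H2_pair t ht)
  have h3 := finrank_P3 t (by norm_num) h2
  rw [h1] at h3
  omega
end

section
/- Let G = A_k with k > 20, and let H₀ be a subgroup of a group H with normal subgroup M such that H/M = G, the image π(H₀) of H₀ in G has index less than k(k-1)/2 in G... Specifically: every proper subgroup of A_k (k > 20) of index less than k(k-1)/2 is the stabilizer A_{k-1} of a point, i.e., any subgroup of A_k of index strictly between 1 and k(k-1)/2 has index k and is a point stabilizer. -/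
open Equiv Equiv.Perm

/-- `H` contains the three-cycle `a ↦ b ↦ c ↦ a`. -/
def AltIdx.T {α : Type*} [DecidableEq α] (H : Subgroup (Perm α)) (a b c : α) : Prop :=
  a ≠ b ∧ a ≠ c ∧ b ≠ c ∧ swap a b * swap b c ∈ H

set_option linter.unusedSectionVars false

namespace AltIdx

section

variable {α : Type*} [DecidableEq α] {H : Subgroup (Perm α)}

lemma T.rot {a b c : α} (h : T H a b c) : T H b c a := by
  obtain ⟨h1, h2, h3, h4⟩ := h
  refine ⟨h3, h1.symm, h2.symm, ?_⟩
  convert h4 using 1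
  ext x
  simp only [coe_mul, Function.comp_apply, swap_apply_def]
  grind

lemma T.rev {a b c : α} (h : T H a b c) : T H c b a := by
  obtain ⟨h1, h2, h3, h4⟩ := h
  refine ⟨h3.symm, h2.symm, h1.symm, ?_⟩
  have := H.inv_mem h4
  rwa [mul_inv_rev, swap_inv, swap_inv, swap_comm b c, swap_comm a b] at this

lemma T.conj {a b c : α} (h : T H a b c) {g : Perm α} (hg : g ∈ H) :
    T H (g a) (g b) (g c) := by
  obtain ⟨h1, h2, h3, h4⟩ := h
  refine ⟨by simpa using h1, by simpa using h2, by simpa using h3, ?_⟩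
  have := H.mul_mem (H.mul_mem hg h4) (H.inv_mem hg)
  convert this using 1
  rw [Equiv.swap_apply_apply, Equiv.swap_apply_apply]
  group

/-- conjugating by a 3-cycle -/
lemma T.four {i j l m : α} (h : T H i j l) (h' : T H i j m) (hlm : l ≠ m) : T H j l m := by
  have h0 := h.conj h'.2.2.2
  obtain ⟨a1, a2, a3, -⟩ := h
  obtain ⟨b1, b2, b3, -⟩ := h'
  have e1 : (swap i j * swap j m) i = j := by
    simp only [coe_mul, Function.comp_apply, swap_apply_def]; grind
  have e2 : (swap i j * swap j m) j = m := by
    simp only [coe_mul, Function.comp_apply, swap_apply_def]; grind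
  have e3 : (swap i j * swap j m) l = l := by
    simp only [coe_mul, Function.comp_apply, swap_apply_def]; grind
  rw [e1, e2, e3] at h0
  exact h0.rev.rot.rot

lemma T.four' {i j l m : α} (h : T H i j l) (h' : T H i j m) (hlm : l ≠ m) : T H i l m :=
  T.four h.rev.rot h'.rev.rot hlm


lemma T.star {i j l m n : α} (h : T H i j l) (h' : T H i m n) (hjm : j ≠ m) : T H i j m := by
  by_cases hlm : l = m
  · exact hlm ▸ h
  by_cases hnj : n = j
  · subst hnj
    exact h'.rev.rot.rot
  by_cases hln : l = n
  · subst hln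
    exact T.four' h.rev.rot.rot h'.rev.rot.rot hjm
  have h0 := h.conj h'.2.2.2
  have e1 : (swap i m * swap m n) i = m := by
    obtain ⟨a1, a2, a3, -⟩ := h
    obtain ⟨b1, b2, b3, -⟩ := h'
    simp only [coe_mul, Function.comp_apply, swap_apply_def]; grind
  have e2 : (swap i m * swap m n) j = j := by
    obtain ⟨a1, a2, a3, -⟩ := h
    obtain ⟨b1, b2, b3, -⟩ := h'
    simp only [coe_mul, Function.comp_apply, swap_apply_def]; grind
  have e3 : (swap i m * swap m n) l = l := by
    obtain ⟨a1, a2, a3, -⟩ := h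
    obtain ⟨b1, b2, b3, -⟩ := h'
    simp only [coe_mul, Function.comp_apply, swap_apply_def]; grind
  rw [e1, e2, e3] at h0
  exact (T.four' h.rot h0.rot h'.1).rev.rot

open Classical in
/-- The class of `x`: points joined to `x` by a three-cycle of `H`. -/
noncomputable def cls [Fintype α] (H : Subgroup (Perm α)) (x : α) : Finset α :=
  Finset.univ.filter (fun y => y = x ∨ ∃ z, T H x y z)

variable [Fintype α]

lemma mem_cls {x y : α} : y ∈ cls H x ↔ y = x ∨ ∃ z, T H x y z := by
  simp [cls]

lemma self_mem_cls (x : α) : x ∈ cls H x := mem_cls.2 (Or.inl rfl)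

lemma cls_symm {x y : α} (h : y ∈ cls H x) : x ∈ cls H y := by
  rcases mem_cls.1 h with rfl | ⟨z, hz⟩
  · exact h
  · exact mem_cls.2 (Or.inr ⟨z, hz.rev.rot⟩)

lemma cls_trans {x y z : α} (h : y ∈ cls H x) (h' : z ∈ cls H y) : z ∈ cls H x := by
  rcases mem_cls.1 h with rfl | ⟨u, hu⟩
  · exact h'
  rcases mem_cls.1 h' with rfl | ⟨v, hv⟩
  · exact h
  by_cases hxz : z = x
  · exact mem_cls.2 (Or.inl hxz)
  · have := T.star hu.rev.rot hv (Ne.symm hxz)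
    exact mem_cls.2 (Or.inr ⟨y, this.rot⟩)

lemma cls_eq {x y : α} (h : y ∈ cls H x) : cls H y = cls H x := by
  ext z
  exact ⟨fun h' => cls_trans h h', fun h' => cls_trans (cls_symm h) h'⟩

lemma T_of_mem_cls {x a b c : α} (ha : a ∈ cls H x) (hb : b ∈ cls H x) (hc : c ∈ cls H x)
    (hab : a ≠ b) (hac : a ≠ c) (hbc : b ≠ c) : T H a b c := by
  have h1 : b ∈ cls H a := by rwa [cls_eq ha]
  have h2 : c ∈ cls H a := by rwa [cls_eq ha]
  rcases mem_cls.1 h1 with rfl | ⟨u, hu⟩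
  · exact absurd rfl hab
  rcases mem_cls.1 h2 with rfl | ⟨v, hv⟩
  · exact absurd rfl hac
  exact T.star hu hv hbc

open scoped Pointwise in
lemma smul_cls {g : Perm α} (hg : g ∈ H) (x : α) : g • cls H x = cls H (g x) := by
  ext y
  rw [← Finset.inv_smul_mem_iff, mem_cls, mem_cls]
  have key : (g⁻¹ • y = x) ↔ y = g x := by
    rw [inv_smul_eq_iff]; rfl
  rw [key]
  refine or_congr Iff.rfl ⟨fun ⟨z, hz⟩ => ⟨g z, ?_⟩, fun ⟨z, hz⟩ => ⟨g⁻¹ z, ?_⟩⟩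
  · simpa [Perm.smul_def] using hz.conj hg
  · simpa [Perm.smul_def] using hz.conj (H.inv_mem hg)

lemma commutator_T {g h : Perm α} (hg : g ∈ H) (hh : h ∈ H) {a : α}
    (hga : g a ≠ a) (hha : h a ≠ a) (hd : ∀ x, x ≠ a → g x = x ∨ h x = x) :
    T H a (g a) (h a) := by
  have hgg : g (g a) ≠ g a := fun e => hga (g.injective e)
  have hhh : h (h a) ≠ h a := fun e => hha (h.injective e)
  have hhg : h (g a) = g a := (hd _ hga).resolve_left hgg
  have hgh : g (h a) = h a := (hd _ hha).resolve_right hhh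
  have hne : g a ≠ h a := by
    intro e; rw [e] at hgg; exact hgg hgh
  refine ⟨hga.symm, hha.symm, hne, ?_⟩
  have hm : g * h * g⁻¹ * h⁻¹ ∈ H :=
    H.mul_mem (H.mul_mem (H.mul_mem hg hh) (H.inv_mem hg)) (H.inv_mem hh)
  convert hm using 1
  rw [eq_mul_inv_iff_mul_eq, eq_mul_inv_iff_mul_eq]
  ext x
  simp only [coe_mul, Function.comp_apply]
  by_cases hx : x = a
  · subst hx
    rw [hhg, hgh, swap_apply_left, swap_apply_of_ne_of_ne hha hne.symm]
  have hgx : g x ≠ g a := fun e => hx (g.injective e)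
  have hhx : h x ≠ h a := fun e => hx (h.injective e)
  rcases hd x hx with e | e
  · rw [e]
    by_cases hxa : h x = a
    · rw [hxa, swap_apply_of_ne_of_ne hga.symm hha.symm, swap_apply_left]
    · have h1 : g (h x) = h x := by
        rcases hd _ hxa with e' | e'
        · exact e'
        · rw [h.injective e', e]
      rw [h1]
      have h2 : h x ≠ g a := by
        intro e'
        rw [e'] at h1
        exact hgg h1
      rw [swap_apply_of_ne_of_ne h2 hhx, swap_apply_of_ne_of_ne hxa h2]
  · rw [e]
    by_cases hxa : g x = a
    · rw [hxa, swap_apply_right, swap_apply_right]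
    · have h1 : h (g x) = g x := by
        rcases hd _ hxa with e' | e'
        · rw [g.injective e', e]
        · exact e'
      rw [h1]
      have h2 : g x ≠ h a := by
        intro e'
        rw [e'] at h1
        exact hhh h1
      rw [swap_apply_of_ne_of_ne hgx h2, swap_apply_of_ne_of_ne hxa hgx]

/-- Bochert's argument relative to a subset `Δ`. -/
lemma bochert (H : Subgroup (Perm α)) (Δ : Finset α) :
    (∃ a b c, a ∈ Δ ∧ b ∈ Δ ∧ c ∈ Δ ∧ T H a b c) ∨
    ∃ Γ ⊆ Δ, (∀ h ∈ H, h.support ⊆ Γ → h = 1) ∧ (∀ h ∈ H, h.support ⊆ Δ \ Γ → h = 1) := by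
  classical
  let P : Finset α → Prop := fun Γ => Γ ⊆ Δ ∧ ∀ h ∈ H, h.support ⊆ Δ \ Γ → h = 1
  have hP : P Δ := ⟨le_rfl, fun h _ hs => by simpa using hs⟩
  obtain ⟨Γ, -, hΓ⟩ := exists_minimal_le_of_wellFoundedLT P Δ hP
  by_cases hg : ∀ h ∈ H, h.support ⊆ Γ → h = 1
  · exact Or.inr ⟨Γ, hΓ.prop.1, hg, hΓ.prop.2⟩
  push Not at hg
  obtain ⟨g, hgH, hgs, hg1⟩ := hg
  left
  obtain ⟨γ, hγ⟩ : g.support.Nonempty := by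
    rw [Finset.nonempty_iff_ne_empty]; simpa using hg1
  have hγΓ := hgs hγ
  have hn : ¬ P (Γ.erase γ) := by
    intro hp
    have := hΓ.le_of_le hp (Finset.erase_subset _ _) hγΓ
    simp at this
  simp only [P, not_and, not_forall] at hn
  obtain ⟨h, hhH, hhs, hh1⟩ := hn ((Finset.erase_subset _ _).trans hΓ.prop.1)
  have hγh : γ ∈ h.support := by
    by_contra hc
    refine hh1 (hΓ.prop.2 h hhH fun x hx => ?_)
    have := hhs hx
    simp only [Finset.mem_sdiff, Finset.mem_erase, not_and] at this ⊢
    exact ⟨this.1, this.2 (fun e => hc (e ▸ hx))⟩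
  refine ⟨γ, g γ, h γ, hΓ.prop.1 hγΓ, hΓ.prop.1 (hgs (apply_mem_support.2 hγ)),
    (Finset.mem_sdiff.1 (hhs (apply_mem_support.2 hγh))).1,
    commutator_T hgH hhH (mem_support.1 hγ) (mem_support.1 hγh) fun x hx => ?_⟩
  by_contra hc
  push Not at hc
  have h1 := hgs (mem_support.2 hc.1)
  have h2 := hhs (mem_support.2 hc.2)
  simp [hx, h1] at h2

lemma factorial_le_index (H : Subgroup (Perm α)) (Γ : Finset α)
    (h : ∀ h ∈ H, h.support ⊆ Γ → h = 1) : Γ.card.factorial ≤ H.index := by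
  have : Function.Injective
      (fun p : Perm Γ => (QuotientGroup.mk (Perm.ofSubtype p) : Perm α ⧸ H)) := by
    intro p q hpq
    have h1 : (Perm.ofSubtype p)⁻¹ * Perm.ofSubtype q ∈ H := QuotientGroup.eq.1 hpq
    rw [← map_inv, ← map_mul] at h1
    have h2 := h _ h1 (by
      intro x hx
      by_contra hc
      exact (mem_support.1 hx) (Perm.ofSubtype_apply_of_not_mem _ hc))
    rw [← map_one (Perm.ofSubtype (p := (· ∈ Γ)))] at h2
    exact inv_mul_eq_one.1 (Perm.ofSubtype_injective h2)
  have := Nat.card_le_card_of_injective _ this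
  rwa [Nat.card_perm, Nat.card_eq_fintype_card, Fintype.card_coe] at this

lemma exists_T {q : ℕ} (H : Subgroup (Perm α)) (Δ : Finset α) (hΔ : 2 * q ≤ Δ.card + 1)
    (hq : H.index < q.factorial) : ∃ a b c, a ∈ Δ ∧ b ∈ Δ ∧ c ∈ Δ ∧ T H a b c := by
  rcases bochert H Δ with h | ⟨Γ, hΓ, h1, h2⟩
  · exact h
  have i1 := factorial_le_index H _ h1
  have i2 := factorial_le_index H _ h2
  have := Finset.card_sdiff_add_card_eq_card hΓ
  exfalso
  rcases (by omega : q ≤ Γ.card ∨ q ≤ (Δ \ Γ).card) with h | h <;>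
  · have := Nat.factorial_le h
    omega

end

lemma factorial_bound (q : ℕ) (hq : 6 ≤ q) : 4 * q * (4 * q - 1) ≤ q.factorial := by
  induction q, hq using Nat.le_induction with
  | base => decide
  | succ n hn ih =>
    rw [Nat.factorial_succ]
    obtain ⟨m, rfl⟩ := Nat.exists_eq_add_of_le hn
    have e1 : 4 * (6 + m + 1) - 1 = 4 * m + 27 := by omega
    have e2 : 4 * (6 + m) - 1 = 4 * m + 23 := by omega
    rw [e1]
    rw [e2] at ih
    nlinarith

lemma exists_big_class (k : ℕ) (hk : 20 < k) (H : Subgroup (Perm (Fin k)))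
    (hi : H.index < k * (k - 1)) : ∃ x, 4 ≤ (cls H x).card := by
  obtain ⟨q, hq1, hq2⟩ : ∃ q, k ≤ 4 * q ∧ 4 * q ≤ k + 3 := ⟨(k + 3) / 4, by omega, by omega⟩
  have hq : H.index < q.factorial :=
    hi.trans_le ((Nat.mul_le_mul hq1 (by omega)).trans (factorial_bound q (by omega)))
  let mx : Fin k → Fin k := fun x => (cls H x).max' ⟨x, self_mem_cls x⟩
  have hmx : ∀ x, mx x ∈ cls H x := fun x => Finset.max'_mem _ _
  have hmxeq : ∀ x y, y ∈ cls H x → mx y = mx x := by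
    intro x y h
    simp only [mx, cls_eq h]
  let Δ : Finset (Fin k) := Finset.univ.filter (fun x => mx x = x)
  have hc := Finset.card_add_card_compl Δ
  rw [Fintype.card_fin] at hc
  rcases (by omega : 2 * q ≤ Δ.card + 1 ∨ 2 * q ≤ Δᶜ.card + 1) with h | h
  · obtain ⟨a, b, c, ha, hb, hc, ht⟩ := exists_T H Δ h hq
    have hab : b ∈ cls H a := mem_cls.2 (Or.inr ⟨c, ht⟩)
    have := hmxeq a b hab
    simp only [Δ, Finset.mem_filter, Finset.mem_univ, true_and] at ha hb
    rw [ha, hb] at this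
    exact absurd this.symm ht.1
  · obtain ⟨a, b, c, ha, hb, hc, ht⟩ := exists_T H Δᶜ h hq
    have hab : b ∈ cls H a := mem_cls.2 (Or.inr ⟨c, ht⟩)
    have hac : c ∈ cls H a := mem_cls.2 (Or.inr ⟨b, ht.rev.rot.rot⟩)
    simp only [Δ, Finset.mem_compl, Finset.mem_filter, Finset.mem_univ, true_and] at ha hb hc
    rw [hmxeq a b hab] at hb
    rw [hmxeq a c hac] at hc
    refine ⟨a, ?_⟩
    have hsub : ({mx a, a, b, c} : Finset (Fin k)) ⊆ cls H a := by
      intro y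
      simp only [Finset.mem_insert, Finset.mem_singleton]
      rintro (rfl | rfl | rfl | rfl)
      · exact hmx a
      · exact self_mem_cls _
      · exact hab
      · exact hac
    refine le_trans (le_of_eq ?_) (Finset.card_le_card hsub)
    obtain ⟨h1, h2, h3, -⟩ := ht
    rw [Finset.card_insert_of_notMem, Finset.card_insert_of_notMem, Finset.card_pair h3]
    · simp [h1, h2]
    · simp [ha, hb, hc]

lemma choose_bound {k b m o : ℕ} (hk : 20 < k) (hb : 4 ≤ b) (hb2 : b ≤ k - 2)
    (ho : o * b ≤ k) (hm : k.choose b ≤ o * m) : k * (k - 1) / 2 ≤ m := by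
  have mono : ∀ r s : ℕ, r ≤ s → s ≤ k / 2 → k.choose r ≤ k.choose s := by
    intro r s hrs
    induction s, hrs using Nat.le_induction with
    | base => intro _; exact le_rfl
    | succ n hn ih =>
      intro h
      exact (ih (by omega)).trans (Nat.choose_le_succ_of_lt_half_left (by omega))
  have mono2 : ∀ r, r ≤ b → r ≤ k - b → k.choose r ≤ k.choose b := by
    intro r h1 h2
    rcases le_or_gt b (k / 2) with h | h
    · exact mono r b h1 h
    · rw [← Nat.choose_symm (by omega : b ≤ k)]
      exact mono r _ h2 (by omega)
  rw [← Nat.choose_two_right]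
  by_cases h4 : b ≤ k - 4
  · have h5 := (mono2 4 hb (by omega)).trans hm
    have h6 : 4 * k.choose 4 ≤ k * m := by
      calc 4 * k.choose 4 ≤ b * (o * m) := Nat.mul_le_mul hb h5
        _ = (o * b) * m := by ring
        _ ≤ k * m := Nat.mul_le_mul_right _ ho
    have h7 : k * (k - 1).choose 3 = 4 * k.choose 4 := by
      have := Nat.add_one_mul_choose_eq (k - 1) 3
      rw [Nat.sub_add_cancel (by omega)] at this
      rw [this]; ring
    rw [← h7] at h6
    have h8 := Nat.le_of_mul_le_mul_left h6 (by omega)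
    refine le_trans ?_ h8
    obtain ⟨n, rfl⟩ : ∃ n, k = n + 2 := ⟨k - 2, by omega⟩
    have e : n + 2 - 1 = n + 1 := by omega
    rw [e]
    have p1 := Nat.choose_succ_right_eq (n + 1) 2
    have p2 : (n + 2).choose 2 = (n + 1).choose 1 + (n + 1).choose 2 := Nat.choose_succ_succ _ _
    have p3 := Nat.choose_succ_right_eq (n + 1) 1
    rw [Nat.choose_one_right] at p2 p3
    have e2 : n + 1 - 2 = n - 1 := by omega
    have e3 : n + 1 - 1 = n := by omega
    simp only [e2, e3, Nat.reduceAdd] at p1 p3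
    rw [p2]
    obtain ⟨t, rfl⟩ : ∃ t, n = t + 19 := ⟨n - 19, by omega⟩
    have e4 : t + 19 - 1 = t + 18 := by omega
    rw [e4] at p1
    nlinarith
  · have : o ≤ 1 := by
      by_contra hc
      have : 2 * b ≤ o * b := Nat.mul_le_mul_right _ (by omega)
      omega
    refine (mono2 2 (by omega) (by omega)).trans (hm.trans ?_)
    calc o * m ≤ 1 * m := Nat.mul_le_mul_right _ this
      _ = m := one_mul m

lemma stab_le {α : Type*} [DecidableEq α] [Fintype α] (H : Subgroup (Perm α)) (i : α)
    (hT : ∀ a b c, a ≠ i → b ≠ i → c ≠ i → a ≠ b → a ≠ c → b ≠ c → T H a b c)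
    (g : Perm α) (hg : g ∈ alternatingGroup α) (hgi : g i = i) : g ∈ H := by
  let s : Finset α := Finset.univ.erase i
  have h1 : g ∈ (alternatingGroup s).map (Perm.ofSubtype : Perm s →* Perm α) := by
    rw [alternatingGroup.map_ofSubtype]
    refine Subgroup.mem_inf.2 ⟨?_, hg⟩
    rw [Perm.mem_range_ofSubtype_iff]
    intro x hx
    have hx' : g x ≠ x := by simpa using hx
    have : x ≠ i := fun e => hx' (e ▸ hgi)
    simp [s, this]
  rw [← closure_three_cycles_eq_alternating, MonoidHom.map_closure] at h1
  refine (Subgroup.closure_le H).2 ?_ h1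
  rintro _ ⟨σ, hσ, rfl⟩
  have hσ' : IsThreeCycle σ := hσ
  obtain ⟨a, ha⟩ : σ.support.Nonempty := by
    rw [Finset.nonempty_iff_ne_empty]; simpa using hσ'.ne_one
  have e := hσ'.eq_swap_mul_swap_iff_mem_support.2 ha
  have nd := hσ'.nodup_iff_mem_support.2 ha
  have n1 : a ≠ σ a := by grind
  have n2 : a ≠ σ (σ a) := by grind
  have n3 : σ a ≠ σ (σ a) := by grind
  have hs : ∀ x : s, (x : α) ≠ i := fun x => Finset.ne_of_mem_erase x.2
  have := hT a (σ a) (σ (σ a)) (hs _) (hs _) (hs _) (Subtype.coe_injective.ne n1)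
    (Subtype.coe_injective.ne n2) (Subtype.coe_injective.ne n3)
  rw [SetLike.mem_coe, e, map_mul, Perm.ofSubtype_swap_eq, Perm.ofSubtype_swap_eq]
  exact this.2.2.2

open scoped Pointwise in
open MulAction in
lemma orbit_bound (k : ℕ) (hk : 20 < k) (K : Subgroup (alternatingGroup (Fin k))) (x : Fin k)
    (hb : (cls (K.map (alternatingGroup (Fin k)).subtype) x).card ≤ k - 2) :
    ∃ o, o * (cls (K.map (alternatingGroup (Fin k)).subtype) x).card ≤ k ∧
      k.choose (cls (K.map (alternatingGroup (Fin k)).subtype) x).card ≤ o * K.index := by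
  set H := K.map (alternatingGroup (Fin k)).subtype with hH
  set b := (cls H x).card with hbdef
  have hKH : ∀ g : K, ((g : (alternatingGroup (Fin k))) : Perm (Fin k)) ∈ H := fun g => ⟨g, g.2, rfl⟩
  have orb : ∀ y ∈ orbit K (cls H x), ∃ z, y = cls H z := by
    rintro _ ⟨g, rfl⟩
    exact ⟨_, smul_cls (hKH g) x⟩
  have orbcard : ∀ y ∈ orbit K (cls H x), y.card = b := by
    rintro _ ⟨g, rfl⟩
    exact Finset.card_smul_finset _ _
  have hfin : (orbit K (cls H x)).Finite := Set.toFinite _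
  refine ⟨(orbit K (cls H x)).ncard, ?_, ?_⟩
  · rw [Set.ncard_eq_toFinset_card _ hfin]
    have h1 : (hfin.toFinset.biUnion id).card = ∑ u ∈ hfin.toFinset, u.card := by
      refine Finset.card_biUnion fun u hu v hv huv => ?_
      obtain ⟨y, rfl⟩ := orb u (hfin.mem_toFinset.1 hu)
      obtain ⟨z, rfl⟩ := orb v (hfin.mem_toFinset.1 hv)
      rw [Function.onFun, Finset.disjoint_left]
      intro w h1 h2
      exact huv ((cls_eq h1).symm.trans (cls_eq h2))
    rw [Finset.sum_const_nat (m := b) (fun u hu => orbcard u (hfin.mem_toFinset.1 hu))] at h1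
    rw [← h1]
    exact (Finset.card_le_univ _).trans (by simp)
  · let B : Set.powersetCard (Fin k) b := ⟨cls H x, rfl⟩
    have hm : IsMultiplyPretransitive (alternatingGroup (Fin k)) (Fin k) b := by
      have := alternatingGroup.isMultiplyPretransitive (Fin k)
      exact isMultiplyPretransitive_of_le (n := Nat.card (Fin k) - 2) (by simpa using hb)
        (Nat.sub_le _ _)
    have : IsPretransitive (alternatingGroup (Fin k)) (Set.powersetCard (Fin k) b) :=
      Set.powersetCard.isPretransitive_of_isMultiplyPretransitive (alternatingGroup (Fin k)) hm
    have h1 := index_stabilizer_of_transitive (alternatingGroup (Fin k)) B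
    rw [Set.powersetCard.card, Nat.card_fin] at h1
    have h2 : stabilizer (alternatingGroup (Fin k)) B = stabilizer (alternatingGroup (Fin k)) (cls H x) := by
      ext g
      rw [mem_stabilizer_iff, mem_stabilizer_iff, ← Subtype.coe_inj]
      exact Iff.rfl
    rw [h2] at h1
    have h3 : (stabilizer (alternatingGroup (Fin k)) (cls H x)).relIndex K = (orbit K (cls H x)).ncard := by
      rw [← index_stabilizer]
      rfl
    rw [← h1, ← h3, ← Subgroup.inf_relIndex_right, Subgroup.relIndex_mul_index inf_le_right]
    refine Nat.le_of_dvd (Nat.pos_of_ne_zero Subgroup.index_ne_zero_of_finite)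
      (Subgroup.index_dvd_of_le inf_le_left)

end AltIdx

/-- **(Classical; cf. Liebeck, Lemma 1.1.)** For `k > 20`, every proper subgroup of `A_k`
of index strictly less than `k(k-1)/2` is a point stabilizer (isomorphic to `A_{k-1}`):
it has index exactly `k` and equals the stabilizer of some point `i ∈ {1,…,k}`. -/
theorem subgroup_of_alternating_small_index_is_point_stabilizer
    (k : ℕ) (hk : 20 < k)
    (K : Subgroup (alternatingGroup (Fin k))) (hK : K ≠ ⊤)
    (hindex : K.index < k * (k - 1) / 2) :
    K.index = k ∧ ∃ i : Fin k,
      K = Subgroup.comap (alternatingGroup (Fin k)).subtype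
            (MulAction.stabilizer (Equiv.Perm (Fin k)) i) := by
  classical
  have hind : (K.map (alternatingGroup (Fin k)).subtype).index < k * (k - 1) := by
    have : Nontrivial (Fin k) := Fin.nontrivial_iff_two_le.2 (by omega)
    rw [Subgroup.index_map_subtype, alternatingGroup.index_eq_two]
    omega
  obtain ⟨x, hx⟩ := AltIdx.exists_big_class k hk _ hind
  by_cases hb : (AltIdx.cls (K.map (alternatingGroup (Fin k)).subtype) x).card ≤ k - 2
  · obtain ⟨o, ho1, ho2⟩ := AltIdx.orbit_bound k hk K x hb
    exact absurd (AltIdx.choose_bound hk hx hb ho1 ho2) (not_le.2 hindex)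
  obtain ⟨i, hi⟩ : ∃ i, ∀ y, y ≠ i →
      y ∈ AltIdx.cls (K.map (alternatingGroup (Fin k)).subtype) x := by
    have hc := Finset.card_add_card_compl (AltIdx.cls (K.map (alternatingGroup (Fin k)).subtype) x)
    rw [Fintype.card_fin] at hc
    have : Nonempty (Fin k) := ⟨x⟩
    obtain ⟨i, hi⟩ := Finset.card_le_one_iff_subset_singleton.1
      (show (AltIdx.cls (K.map (alternatingGroup (Fin k)).subtype) x)ᶜ.card ≤ 1 by omega)
    refine ⟨i, fun y hy => ?_⟩
    by_contra hcon
    exact hy (by simpa using hi (Finset.mem_compl.2 hcon))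
  have hle : MulAction.stabilizer (alternatingGroup (Fin k)) i ≤ K := by
    intro g hg
    have := AltIdx.stab_le (K.map (alternatingGroup (Fin k)).subtype) i
      (fun a b c ha hb hc => AltIdx.T_of_mem_cls (hi a ha) (hi b hb) (hi c hc))
      (g : Equiv.Perm (Fin k)) g.2 hg
    obtain ⟨g', hg', e⟩ := this
    rwa [← Subtype.ext (a1 := g') (a2 := g) e]
  have h3 : 3 ≤ Nat.card (Fin k) := by rw [Nat.card_fin]; omega
  have : Nontrivial (Fin k) := Fin.nontrivial_iff_two_le.2 (by omega)
  have hprim := alternatingGroup.isPreprimitive_of_three_le_card (Fin k) h3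
  have hco : IsCoatom (MulAction.stabilizer (alternatingGroup (Fin k)) i) :=
    MulAction.IsPreprimitive.isCoatom_stabilizer_of_isPreprimitive _ i
  have hKe : K = MulAction.stabilizer (alternatingGroup (Fin k)) i :=
    (hco.le_iff.1 hle).resolve_left hK
  refine ⟨?_, i, ?_⟩
  · rw [hKe, MulAction.index_stabilizer_of_transitive, Nat.card_fin]
  · rw [hKe]
    rfl
end
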